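/- arXiv:math/9807102 — 3 statements merged into one kernel-verified Lean document; each statement's English description precedes it below -/
import Mathlib

section
/- Suppose g : ℕ → ℂ is multiplicative and satisfies Condition (A) for some κ = ξ + iη with η² < 2ξ + 1, satisfies Condition (B), and satisfies Condition (C) with some β < ξ + 1. Then the asymptotic formula M_g(x,q) = c_q(g)·log^κ x + O_g(δ(q)·(log x)^{β−1}) holds uniformly for all x ≥ 2 and all nonzero integers q, where c_q(g) = Γ(κ+1)^{−1} (φ(q)/q)^κ ∏_{p ∤ q} (1 − 1/p)^κ (1 + g(p)/p + g(p²)/p² + ⋯), φ is Euler's totient function, and δ(q) = 1 + ∑_{p | q} |g(p)| log p / p. -/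
open Filter Finset
open scoped ENNReal NNReal

/-- `g` is multiplicative: `g 1 = 1` and `g (m*n) = g m * g n` for coprime `m, n`. -/
def IsMult (g : ℕ → ℂ) : Prop :=
  g 1 = 1 ∧ ∀ m n : ℕ, Nat.Coprime m n → g (m * n) = g m * g n

/-- `M_g(x) = ∑_{n ≤ x} g(n)/n`. -/
noncomputable def Mg (g : ℕ → ℂ) (x : ℝ) : ℂ :=
  ∑ n ∈ Finset.Icc 1 ⌊x⌋₊, g n / (n : ℂ)

/-- The finite set of primes `p ≤ x`. -/
noncomputable def primesLE (x : ℝ) : Finset ℕ :=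
  (Finset.range (⌊x⌋₊ + 1)).filter Nat.Prime

/-- Condition (A): `∑_{p ≤ x} g(p) log p / p = κ log x + O(1)` for all `x ≥ 2`. -/
def CondA (g : ℕ → ℂ) (κ : ℂ) : Prop :=
  ∃ C : ℝ, ∀ x : ℝ, 2 ≤ x →
    ‖(∑ p ∈ primesLE x, g p * (Real.log p : ℂ) / (p : ℂ)) - κ * (Real.log x : ℂ)‖ ≤ C

/-- Condition (B):
`∑_p (|g(p)| log p / p) ∑_{r≥1} |g(p^r)|/p^r + ∑_p ∑_{r≥2} |g(p^r)| log(p^r)/p^r < ∞`. -/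
def CondB (g : ℕ → ℂ) : Prop :=
  (∑' p : Nat.Primes,
      ((‖g (p : ℕ)‖₊ : ℝ≥0∞) * ENNReal.ofReal (Real.log (p : ℕ)) / ((p : ℕ) : ℝ≥0∞)) *
        ∑' r : ℕ, (‖g ((p : ℕ) ^ (r + 1))‖₊ : ℝ≥0∞) / (((p : ℕ) ^ (r + 1) : ℕ) : ℝ≥0∞))
    + (∑' p : Nat.Primes, ∑' r : ℕ,
        (‖g ((p : ℕ) ^ (r + 2))‖₊ : ℝ≥0∞) *
          ENNReal.ofReal (Real.log ((p : ℕ) ^ (r + 2) : ℕ)) /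
          (((p : ℕ) ^ (r + 2) : ℕ) : ℝ≥0∞)) < ⊤

/-- Condition (C): `∏_{p ≤ x} (1 + |g(p)|/p) ≪ (log x)^β` for all `x ≥ 2`. -/
def CondC (g : ℕ → ℂ) (β : ℝ) : Prop :=
  ∃ C : ℝ, ∀ x : ℝ, 2 ≤ x →
    ∏ p ∈ primesLE x, (1 + ‖g p‖ / (p : ℝ)) ≤ C * Real.log x ^ β

/-- The Euler factor `(1 - 1/p)^κ (1 + g(p)/p + g(p²)/p² + ⋯)` (principal branch power). -/
noncomputable def eulerFactor (g : ℕ → ℂ) (κ : ℂ) (p : ℕ) : ℂ :=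
  (1 - 1 / (p : ℂ)) ^ κ * ∑' r : ℕ, g (p ^ r) / (p : ℂ) ^ r

/-- `M_g(x,q) = ∑_{n ≤ x, (n,q)=1} g(n)/n`. -/
noncomputable def Mgq (g : ℕ → ℂ) (x : ℝ) (q : ℤ) : ℂ :=
  ∑ n ∈ (Finset.Icc 1 ⌊x⌋₊).filter (fun n => Nat.Coprime n q.natAbs), g n / (n : ℂ)

/-- `δ(q) = 1 + ∑_{p ∣ q} |g(p)| log p / p`. -/
noncomputable def deltaq (g : ℕ → ℂ) (q : ℤ) : ℝ :=
  1 + ∑ p ∈ q.natAbs.primeFactors, ‖g p‖ * Real.log p / (p : ℝ)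

/-!
Fix `q` and let `f n = g n / n` on the integers coprime to `q`, and `f n = 0` otherwise. Put
`M x = ∑_{n ≤ x} f n` and `T x = ∑_{n ≤ x} f n log (x / n) = ∫_1^x M t dt / t`. Writing `log n` as a
sum of `log p ^ r` over the prime powers exactly dividing `n`, and using (A) and (B), one finds
`log x * M x - (κ + 1) * T x ≪ δ(q) ∑_{n ≤ x} |f n|`, which is `≪ δ(q) (log x) ^ β` by (C). With
`u = log x` this is the perturbed Euler equation `u T' = (κ + 1) T + O(δ(q) u ^ β)`; since
`β < Re κ + 1`, multiplying by `u ^ (-κ - 2)` and integrating gives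
`M x = c (log x) ^ κ + O(δ(q) (log x) ^ (β - 1))` for some constant `c`.

To identify `c`, compare two evaluations of the limit of `s ^ κ ∑ f n / n ^ s` as `s → 0+`. By the
asymptotic formula and an Abelian theorem it is `c Γ(κ + 1)`. By comparison with `ζ(1 + s) ^ κ` it
is `∏_p (1 - 1 / p) ^ κ (1 + f p + f (p ^ 2) + ⋯)`; this product need not converge absolutely, but
its first-order part `∑_p (f p - κ / p)` converges by (A), Mertens' estimate and partial summation.
The primes dividing `q` contribute the factor `(φ(q) / q) ^ κ`.
-/

section ConvolutionInequality

variable {f : ℕ → ℂ} {x : ℝ} {p : ℕ}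

/-- The partial sum `∑_{n ≤ x} f n`. -/
noncomputable def summatory {E : Type*} [AddCommMonoid E] (f : ℕ → E) (x : ℝ) : E :=
  ∑ n ∈ Icc 1 ⌊x⌋₊, f n

/-- The logarithmically smoothed partial sum `∑_{n ≤ x} f n log (x / n)`. -/
noncomputable def logSummatory (f : ℕ → ℂ) (x : ℝ) : ℂ :=
  ∑ n ∈ Icc 1 ⌊x⌋₊, f n * ((Real.log x - Real.log n : ℝ) : ℂ)

/-- The analogue `∑_{p ≤ x} f p log p` of Chebyshev's function `θ`. Condition (A) bounds
`primeLogSum f x - κ log x` for `f n = g n / n`. -/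
noncomputable def primeLogSum (f : ℕ → ℂ) (x : ℝ) : ℂ :=
  ∑ p ∈ primesLE x, f p * Real.log p

/-- The part of condition (B), for `f n = g n / n`, that involves `p ^ (r + 2)`. It is extended
by zero to all `p` so that sums over primes can be indexed by `ℕ`. -/
noncomputable def primePowerWeight (f : ℕ → ℂ) (p r : ℕ) : ℝ :=
  if p.Prime then (‖f p‖ * ‖f (p ^ (r + 1))‖ + (r + 2) * ‖f (p ^ (r + 2))‖) * Real.log p else 0

/-- The part of condition (B), for `f n = g n / n`, that involves powers of `p`. -/
noncomputable def primeWeight (f : ℕ → ℂ) (p : ℕ) : ℝ := ∑' r, primePowerWeight f p r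

/-- The sum of `f m` over the `m ≤ N` that are not divisible by `p`. -/
noncomputable def sumNotDvd (f : ℕ → ℂ) (p N : ℕ) : ℂ := ∑ m ∈ Icc 1 N with ¬ p ∣ m, f m

lemma primePowerWeight_of_prime (hp : p.Prime) (r : ℕ) : primePowerWeight f p r =
    (‖f p‖ * ‖f (p ^ (r + 1))‖ + (r + 2) * ‖f (p ^ (r + 2))‖) * Real.log p :=
  if_pos hp

lemma primePowerWeight_nonneg (f : ℕ → ℂ) (p r : ℕ) : 0 ≤ primePowerWeight f p r := by
  unfold primePowerWeight
  split_ifs <;> positivity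

lemma primeWeight_nonneg (f : ℕ → ℂ) (p : ℕ) : 0 ≤ primeWeight f p :=
  tsum_nonneg (primePowerWeight_nonneg f p)

lemma one_le_two_mul_log_prime (hp : p.Prime) : 1 ≤ 2 * Real.log p := by
  have hlog : Real.log 2 ≤ Real.log p :=
    Real.log_le_log two_pos (by exact_mod_cast hp.two_le)
  linarith [Real.log_two_gt_d9]

lemma norm_prime_pow_le_primePowerWeight (hp : p.Prime) (r : ℕ) :
    ‖f (p ^ (r + 2))‖ ≤ primePowerWeight f p r := by
  have hlog := one_le_two_mul_log_prime hp
  have hcoeff : 1 ≤ ((r : ℝ) + 2) * Real.log p := by nlinarith [r.cast_nonneg (α := ℝ)]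
  calc ‖f (p ^ (r + 2))‖
      ≤ ‖f (p ^ (r + 2))‖ * (((r : ℝ) + 2) * Real.log p) :=
        le_mul_of_one_le_right (norm_nonneg _) hcoeff
    _ ≤ ‖f p‖ * ‖f (p ^ (r + 1))‖ * Real.log p
          + ‖f (p ^ (r + 2))‖ * (((r : ℝ) + 2) * Real.log p) :=
        le_add_of_nonneg_left (by positivity)
    _ = primePowerWeight f p r := by rw [primePowerWeight_of_prime hp]; ring

lemma sq_norm_prime_le_primePowerWeight (hp : p.Prime) :
    ‖f p‖ ^ 2 ≤ 2 * primePowerWeight f p 0 := by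
  have hlog := one_le_two_mul_log_prime hp
  calc ‖f p‖ ^ 2 ≤ ‖f p‖ ^ 2 * (2 * Real.log p) := le_mul_of_one_le_right (sq_nonneg _) hlog
    _ ≤ ‖f p‖ ^ 2 * (2 * Real.log p) + 4 * ‖f (p ^ 2)‖ * Real.log p :=
        le_add_of_nonneg_right (by positivity)
    _ = 2 * primePowerWeight f p 0 := by
        rw [primePowerWeight_of_prime hp]
        push_cast [zero_add, pow_one]
        ring

section SummableWeight

variable (hw : Summable fun x : ℕ × ℕ ↦ primePowerWeight f x.1 x.2)
include hw

lemma summable_primeWeight : Summable (primeWeight f) := hw.prod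

lemma sum_sum_primePowerWeight_le (S : Finset ℕ) (R : ℕ) :
    ∑ p ∈ S, ∑ r ∈ range R, primePowerWeight f p r ≤ ∑' p, primeWeight f p :=
  calc ∑ p ∈ S, ∑ r ∈ range R, primePowerWeight f p r
      ≤ ∑ p ∈ S, primeWeight f p := sum_le_sum fun p _ ↦
        (hw.prod_factor p).sum_le_tsum _ fun r _ ↦ primePowerWeight_nonneg f p r
    _ ≤ ∑' p, primeWeight f p :=
        (summable_primeWeight hw).sum_le_tsum _ fun p _ ↦ primeWeight_nonneg f p

lemma summable_norm_prime_pow_add_two (hp : p.Prime) : Summable fun r ↦ ‖f (p ^ (r + 2))‖ :=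
  .of_nonneg_of_le (fun _ ↦ norm_nonneg _) (norm_prime_pow_le_primePowerWeight hp)
    (hw.prod_factor p)

lemma summable_norm_prime_pow (hp : p.Prime) : Summable fun r ↦ ‖f (p ^ r)‖ :=
  (summable_nat_add_iff 2).1 (summable_norm_prime_pow_add_two hw hp)

lemma tsum_norm_prime_pow_add_two_le (hp : p.Prime) :
    ∑' r, ‖f (p ^ (r + 2))‖ ≤ primeWeight f p :=
  (summable_norm_prime_pow_add_two hw hp).tsum_le_tsum (norm_prime_pow_le_primePowerWeight hp)
    (hw.prod_factor p)

lemma sq_norm_prime_le_primeWeight (hp : p.Prime) : ‖f p‖ ^ 2 ≤ 2 * primeWeight f p :=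
  (sq_norm_prime_le_primePowerWeight hp).trans <| mul_le_mul_of_nonneg_left
    ((hw.prod_factor p).le_tsum 0 fun r _ ↦ primePowerWeight_nonneg f p r) two_pos.le

end SummableWeight

/-! ### The logarithmic convolution inequality -/

lemma log_eq_sum_factorization_mul_log {n : ℕ} {s : Finset ℕ} (hs : n.primeFactors ⊆ s) :
    Real.log n = ∑ p ∈ s, (n.factorization p : ℝ) * Real.log p := by
  rw [Real.log_nat_eq_sum_factorization, Finsupp.sum]
  refine sum_subset hs fun p _ hp ↦ ?_
  rw [Finsupp.notMem_support_iff.1 hp, Nat.cast_zero, zero_mul]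

lemma primeFactors_subset_primesLE {n : ℕ} (hn : n ≤ ⌊x⌋₊) : n.primeFactors ⊆ primesLE x :=
  fun _ hp ↦ mem_filter.2 ⟨mem_range_succ_iff.2 ((Nat.le_of_mem_primeFactors hp).trans hn),
    Nat.prime_of_mem_primeFactors hp⟩

lemma norm_sumNotDvd_le {M N : ℕ} (f : ℕ → ℂ) (p : ℕ) (hMN : M ≤ N) :
    ‖sumNotDvd f p M‖ ≤ ∑ n ∈ Icc 1 N, ‖f n‖ :=
  (norm_sum_le _ _).trans <| sum_le_sum_of_subset_of_nonneg
    ((filter_subset _ _).trans (Icc_subset_Icc_right hMN)) fun _ _ _ ↦ norm_nonneg _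

lemma IsMult.sum_factorization_eq (hf : IsMult f) (hp : p.Prime) (N r : ℕ) :
    ∑ n ∈ Icc 1 N with n.factorization p = r, f n = f (p ^ r) * sumNotDvd f p (N / p ^ r) := by
  have hpr : 0 < p ^ r := pow_pos hp.pos r
  rw [sumNotDvd, mul_sum]
  refine sum_nbij' (· / p ^ r) (p ^ r * ·) ?_ ?_ ?_ ?_ ?_ <;>
    simp only [mem_filter, mem_Icc, and_imp]
  · rintro n hn hnN rfl
    exact ⟨⟨Nat.ordCompl_pos p (by omega), Nat.div_le_div_right hnN⟩,
      Nat.not_dvd_ordCompl hp (by omega)⟩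
  · intro m hm hmN hpm
    refine ⟨⟨Nat.mul_pos hpr hm, mul_comm m _ ▸ (Nat.le_div_iff_mul_le hpr).1 hmN⟩, ?_⟩
    rw [Nat.factorization_mul hpr.ne' (by omega), hp.factorization_pow]
    simp [Nat.factorization_eq_zero_of_not_dvd hpm]
  · rintro n - - rfl
    exact Nat.ordProj_mul_ordCompl_eq_self n p
  · exact fun m _ _ _ ↦ Nat.mul_div_cancel_left m hpr
  · rintro n hn - rfl
    have hcop : (p ^ n.factorization p).Coprime (n / p ^ n.factorization p) :=
      (Nat.coprime_ordCompl hp (by omega)).pow_left _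
    rw [← hf.2 _ _ hcop, Nat.ordProj_mul_ordCompl_eq_self]

lemma IsMult.sum_mul_factorization (hf : IsMult f) (hp : p.Prime) {N R : ℕ} (hN : N < p ^ R)
    (c : ℕ → ℂ) : ∑ n ∈ Icc 1 N, c (n.factorization p) * f n =
      ∑ r ∈ range R, c r * (f (p ^ r) * sumNotDvd f p (N / p ^ r)) := by
  have hmaps : ∀ n ∈ Icc 1 N, n.factorization p ∈ range R := fun n hn ↦ by
    obtain ⟨hn1, hnN⟩ := mem_Icc.1 hn
    exact mem_range.2 <| (Nat.pow_lt_pow_iff_right hp.one_lt).1 <|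
      (Nat.ordProj_le p (by omega)).trans_lt (hnN.trans_lt hN)
  rw [← sum_fiberwise_of_maps_to hmaps]
  refine sum_congr rfl fun r _ ↦ ?_
  rw [← hf.sum_factorization_eq hp, mul_sum]
  exact sum_congr rfl fun n hn ↦ by rw [(mem_filter.1 hn).2]

lemma IsMult.sum_factorization_mul_sub (hf : IsMult f) (hp : p.Prime) (N : ℕ) :
    ∑ n ∈ Icc 1 N, (n.factorization p : ℂ) * f n - f p * ∑ m ∈ Icc 1 (N / p), f m =
      ∑ r ∈ range N, ((r + 2 : ℂ) * f (p ^ (r + 2)) - f p * f (p ^ (r + 1))) *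
        sumNotDvd f p (N / p ^ (r + 2)) := by
  have hN : N < p ^ (N + 2) := (N.lt_pow_self hp.one_lt).trans
    (Nat.pow_lt_pow_right hp.one_lt (by omega))
  have hNp : N / p < p ^ (N + 1) := (Nat.div_le_self N p).trans_lt <|
    (N.lt_pow_self hp.one_lt).trans (Nat.pow_lt_pow_right hp.one_lt (by omega))
  have hlog := hf.sum_mul_factorization hp hN fun r ↦ (r : ℂ)
  have hconv := hf.sum_mul_factorization hp hNp fun _ ↦ 1
  simp only [one_mul] at hconv
  rw [hlog, hconv, sum_range_succ', sum_range_succ', sum_range_succ' _ N, mul_add, mul_sum]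
  simp only [pow_zero, hf.1, pow_one, zero_add, Nat.cast_zero, Nat.cast_one, zero_mul, one_mul,
    add_zero, Nat.div_one, Nat.div_div_eq_div_mul, ← pow_succ']
  rw [add_sub_add_right_eq_sub, ← sum_sub_distrib]
  exact sum_congr rfl fun r _ ↦ by push_cast; ring

lemma IsMult.norm_sum_factorization_mul_sub_le (hf : IsMult f) (hp : p.Prime) (N : ℕ) :
    ‖(∑ n ∈ Icc 1 N, (n.factorization p : ℂ) * f n - f p * ∑ m ∈ Icc 1 (N / p), f m) *
        Real.log p‖ ≤
      (∑ r ∈ range N, primePowerWeight f p r) * ∑ n ∈ Icc 1 N, ‖f n‖ := by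
  rw [hf.sum_factorization_mul_sub hp, sum_mul, sum_mul]
  refine norm_sum_le_of_le _ fun r _ ↦ ?_
  have hcoeff : ‖(r + 2 : ℂ) * f (p ^ (r + 2)) - f p * f (p ^ (r + 1))‖ ≤
      ‖f p‖ * ‖f (p ^ (r + 1))‖ + (r + 2) * ‖f (p ^ (r + 2))‖ := by
    refine (norm_sub_le _ _).trans_eq ?_
    rw [norm_mul, norm_mul, add_comm]
    congr 2
    exact_mod_cast Complex.norm_natCast (r + 2)
  calc _ = ‖(r + 2 : ℂ) * f (p ^ (r + 2)) - f p * f (p ^ (r + 1))‖ * Real.log p *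
        ‖sumNotDvd f p (N / p ^ (r + 2))‖ := by
        rw [norm_mul, norm_mul, Complex.norm_of_nonneg (Real.log_natCast_nonneg p),
          mul_right_comm]
    _ ≤ primePowerWeight f p r * ∑ n ∈ Icc 1 N, ‖f n‖ := by
        rw [primePowerWeight_of_prime hp]
        gcongr
        exact norm_sumNotDvd_le f p (Nat.div_le_self _ _)

lemma sum_mul_log_eq_sum_primesLE (f : ℕ → ℂ) (x : ℝ) :
    ∑ n ∈ Icc 1 ⌊x⌋₊, f n * Real.log n =
      ∑ p ∈ primesLE x, (∑ n ∈ Icc 1 ⌊x⌋₊, (n.factorization p : ℂ) * f n) * Real.log p := by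
  simp_rw [sum_mul]
  rw [sum_comm]
  refine sum_congr rfl fun n hn ↦ ?_
  rw [log_eq_sum_factorization_mul_log (primeFactors_subset_primesLE (mem_Icc.1 hn).2),
    Complex.ofReal_sum, mul_sum]
  exact sum_congr rfl fun p _ ↦ by push_cast; ring

lemma sum_mul_primeLogSum_div (f : ℕ → ℂ) (x : ℝ) :
    ∑ m ∈ Icc 1 ⌊x⌋₊, f m * primeLogSum f (x / m) =
      ∑ p ∈ primesLE x, f p * (∑ m ∈ Icc 1 (⌊x⌋₊ / p), f m) * Real.log p := by
  simp only [primeLogSum, mul_sum, sum_mul]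
  rw [sum_comm' (t' := primesLE x) (s' := fun p ↦ Icc 1 (⌊x⌋₊ / p))]
  · exact sum_congr rfl fun p _ ↦ sum_congr rfl fun m _ ↦ by ring
  · intro m p
    simp only [primesLE, mem_filter, mem_range, mem_Icc, Nat.floor_div_natCast, Nat.lt_succ_iff]
    constructor
    · rintro ⟨⟨hm, -⟩, hpm, hp⟩
      exact ⟨⟨hm, (Nat.le_div_iff_mul_le hp.pos).2
        (mul_comm m p ▸ (Nat.le_div_iff_mul_le hm).1 hpm)⟩, hpm.trans (Nat.div_le_self _ _), hp⟩
    · rintro ⟨⟨hm, hmp⟩, -, hp⟩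
      exact ⟨⟨hm, hmp.trans (Nat.div_le_self _ _)⟩, (Nat.le_div_iff_mul_le hm).2
        (mul_comm m p ▸ (Nat.le_div_iff_mul_le hp.pos).1 hmp), hp⟩

lemma IsMult.norm_sum_mul_log_sub_le (hf : IsMult f)
    (hw : Summable fun x : ℕ × ℕ ↦ primePowerWeight f x.1 x.2) (x : ℝ) :
    ‖∑ n ∈ Icc 1 ⌊x⌋₊, f n * Real.log n - ∑ m ∈ Icc 1 ⌊x⌋₊, f m * primeLogSum f (x / m)‖ ≤
      (∑' p, primeWeight f p) * summatory (‖f ·‖) x := by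
  rw [sum_mul_log_eq_sum_primesLE, sum_mul_primeLogSum_div, ← sum_sub_distrib]
  simp_rw [← sub_mul]
  refine (norm_sum_le_of_le _ fun p hp ↦
    hf.norm_sum_factorization_mul_sub_le (mem_filter.1 hp).2 ⌊x⌋₊).trans ?_
  rw [← sum_mul]
  exact mul_le_mul_of_nonneg_right (sum_sum_primePowerWeight_le hw _ _)
    (sum_nonneg fun _ _ ↦ norm_nonneg _)

lemma IsMult.norm_log_mul_summatory_sub_le (hf : IsMult f)
    (hw : Summable fun x : ℕ × ℕ ↦ primePowerWeight f x.1 x.2) {κ : ℂ} {D : ℝ}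
    (hD : ∀ y : ℝ, 1 ≤ y → ‖primeLogSum f y - κ * Real.log y‖ ≤ D) (hx : 0 < x) :
    ‖Real.log x * summatory f x - (κ + 1) * logSummatory f x‖ ≤
      (∑' p, primeWeight f p + D) * summatory (‖f ·‖) x := by
  have hmain := hf.norm_sum_mul_log_sub_le hw x
  have herr : ‖∑ m ∈ Icc 1 ⌊x⌋₊, f m * (primeLogSum f (x / m) - κ * Real.log (x / m))‖ ≤
      D * summatory (‖f ·‖) x := by
    rw [summatory, mul_sum]
    refine norm_sum_le_of_le _ fun m hm ↦ ?_
    obtain ⟨hm1, hmx⟩ := mem_Icc.1 hm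
    have hm0 : (0 : ℝ) < m := by exact_mod_cast hm1
    rw [norm_mul, mul_comm]
    gcongr
    exact hD _ ((one_le_div hm0).2 ((Nat.le_floor_iff hx.le).1 hmx))
  have hsplit : Real.log x * summatory f x - (κ + 1) * logSummatory f x =
      (∑ n ∈ Icc 1 ⌊x⌋₊, f n * Real.log n - ∑ m ∈ Icc 1 ⌊x⌋₊, f m * primeLogSum f (x / m)) +
        ∑ m ∈ Icc 1 ⌊x⌋₊, f m * (primeLogSum f (x / m) - κ * Real.log (x / m)) := by
    simp only [summatory, logSummatory, mul_sum]
    rw [← sum_sub_distrib, ← sum_sub_distrib, ← sum_add_distrib]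
    refine sum_congr rfl fun m hm ↦ ?_
    have hm0 : (m : ℝ) ≠ 0 := by have := (mem_Icc.1 hm).1; positivity
    rw [Real.log_div hx.ne' hm0]
    push_cast
    ring
  rw [hsplit, add_mul]
  exact norm_add_le_of_le hmain herr

end ConvolutionInequality

/-! ### From the convolution inequality to an asymptotic formula -/

section RightDerivative

variable {E : Type*} [NormedAddCommGroup E] [NormedSpace ℝ E] {W W' : ℝ → E} {a γ C : ℝ}

lemma norm_sub_le_rpow_neg_of_norm_deriv_right_le {b : ℝ} (ha : 0 < a) (hγ : 0 < γ) (hab : a ≤ b)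
    (hcont : ContinuousOn W (Set.Ici a))
    (hderiv : ∀ v, a ≤ v → HasDerivWithinAt W (W' v) (Set.Ici v) v)
    (hbound : ∀ v, a ≤ v → ‖W' v‖ ≤ C * v ^ (-γ - 1)) :
    ‖W b - W a‖ ≤ C / γ * a ^ (-γ) := by
  have hC : 0 ≤ C := nonneg_of_mul_nonneg_left ((norm_nonneg _).trans (hbound a le_rfl))
    (Real.rpow_pos_of_pos ha _)
  set B : ℝ → ℝ := fun v ↦ C / γ * (a ^ (-γ) - v ^ (-γ))
  have hB : ∀ v, a ≤ v → HasDerivAt B (C * v ^ (-γ - 1)) v := fun v hv ↦ by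
    have hv0 : v ≠ 0 := (ha.trans_le hv).ne'
    refine (((Real.hasDerivAt_rpow_const (p := -γ) (.inl hv0)).const_sub
      (a ^ (-γ))).const_mul (C / γ)).congr_deriv ?_
    field_simp
  have hWB : ‖W b - W a‖ ≤ B b :=
    image_norm_le_of_norm_deriv_right_le_deriv_boundary' (f := fun v ↦ W v - W a)
      ((hcont.mono Set.Icc_subset_Ici_self).sub continuousOn_const)
      (fun v hv ↦ (hderiv v hv.1).sub_const _) (by simp [B])
      (fun v hv ↦ (hB v hv.1).continuousAt.continuousWithinAt)
      (fun v hv ↦ (hB v hv.1).hasDerivWithinAt) (fun v hv ↦ hbound v hv.1)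
      (Set.right_mem_Icc.2 hab)
  refine hWB.trans (mul_le_mul_of_nonneg_left ?_ (by positivity))
  exact sub_le_self _ (Real.rpow_nonneg (ha.le.trans hab) _)

lemma exists_norm_sub_le_rpow_neg_of_norm_deriv_right_le [CompleteSpace E] (ha : 0 < a)
    (hγ : 0 < γ) (hcont : ContinuousOn W (Set.Ici a))
    (hderiv : ∀ v, a ≤ v → HasDerivWithinAt W (W' v) (Set.Ici v) v)
    (hbound : ∀ v, a ≤ v → ‖W' v‖ ≤ C * v ^ (-γ - 1)) :
    ∃ c, ∀ u, a ≤ u → ‖W u - c‖ ≤ C / γ * u ^ (-γ) := by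
  have hdiff : ∀ u b, a ≤ u → u ≤ b → ‖W b - W u‖ ≤ C / γ * u ^ (-γ) := fun u b hu hub ↦
    norm_sub_le_rpow_neg_of_norm_deriv_right_le (ha.trans_le hu) hγ hub
      (hcont.mono (Set.Ici_subset_Ici.2 hu)) (fun v hv ↦ hderiv v (hu.trans hv))
      (fun v hv ↦ hbound v (hu.trans hv))
  have hcauchy : CauchySeq fun n : ℕ ↦ W (a + n) := by
    refine cauchySeq_of_le_tendsto_0' (fun n : ℕ ↦ C / γ * (a + n) ^ (-γ)) (fun n m hnm ↦ ?_) ?_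
    · rw [dist_comm, dist_eq_norm]
      exact hdiff _ _ (by simp) (by gcongr)
    · simpa using ((tendsto_rpow_neg_atTop hγ).comp
        (tendsto_atTop_add_const_left _ a tendsto_natCast_atTop_atTop)).const_mul (C / γ)
  obtain ⟨c, hc⟩ := cauchySeq_tendsto_of_complete hcauchy
  refine ⟨c, fun u hu ↦ ?_⟩
  rw [norm_sub_rev]
  refine le_of_tendsto (hc.sub_const (W u)).norm ?_
  filter_upwards [eventually_ge_atTop ⌈u⌉₊] with n hn
  exact hdiff _ _ hu ((Nat.ceil_le.1 hn).trans (le_add_of_nonneg_left ha.le))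

end RightDerivative

section Tauberian

variable {κ : ℂ} {a β C : ℝ} {M T : ℝ → ℂ}

lemma hasDerivWithinAt_mul_cpow_neg {u : ℝ} (hu : 0 < u)
    (hderiv : HasDerivWithinAt T (M u) (Set.Ici u) u) :
    HasDerivWithinAt (fun v : ℝ ↦ T v * (v : ℂ) ^ (-(κ + 1)))
      ((u * M u - (κ + 1) * T u) * (u : ℂ) ^ (-(κ + 1) - 1)) (Set.Ici u) u := by
  have hu0 : (u : ℂ) ≠ 0 := by exact_mod_cast hu.ne'
  have hpow : HasDerivAt (fun y : ℝ ↦ (y : ℂ) ^ (-(κ + 1)))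
      (-(κ + 1) * (u : ℂ) ^ (-(κ + 1) - 1) * 1) u :=
    ((hasDerivAt_id (u : ℂ)).cpow_const (.inl (by simpa using hu))).comp_ofReal
  refine (hderiv.mul hpow.hasDerivWithinAt).congr_deriv ?_
  rw [show (u : ℂ) ^ (-(κ + 1)) = (u : ℂ) ^ (-(κ + 1) - 1) * u by
    rw [Complex.cpow_sub _ _ hu0, Complex.cpow_one, div_mul_cancel₀ _ hu0]]
  ring

-- The equation `u T' = (κ + 1) T` has the solutions `T = c u ^ (κ + 1)`: we integrate the
-- derivative of `T u * u ^ (-(κ + 1))`.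
lemma exists_norm_sub_mul_cpow_add_one_le (ha : 0 < a) (hβ : β < κ.re + 1)
    (hcont : Continuous T) (hderiv : ∀ u, HasDerivWithinAt T (M u) (Set.Ici u) u)
    (hbound : ∀ u, a ≤ u → ‖u * M u - (κ + 1) * T u‖ ≤ C * u ^ β) :
    ∃ c : ℂ, ∀ u : ℝ, a ≤ u →
      ‖T u - c * (u : ℂ) ^ (κ + 1)‖ ≤ C / (κ.re + 1 - β) * u ^ β := by
  have hW : ∀ u, a ≤ u → ‖(u * M u - (κ + 1) * T u) * (u : ℂ) ^ (-(κ + 1) - 1)‖ ≤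
      C * u ^ (-(κ.re + 1 - β) - 1) := fun u hu ↦ by
    have hu0 : 0 < u := ha.trans_le hu
    rw [norm_mul, Complex.norm_cpow_eq_rpow_re_of_pos hu0]
    refine (mul_le_mul_of_nonneg_right (hbound u hu) (Real.rpow_nonneg hu0.le _)).trans_eq ?_
    rw [mul_assoc, ← Real.rpow_add hu0]
    congr 2
    simp only [Complex.sub_re, Complex.neg_re, Complex.add_re, Complex.one_re]
    ring
  obtain ⟨c, hc⟩ := exists_norm_sub_le_rpow_neg_of_norm_deriv_right_le ha (sub_pos.2 hβ)
    (fun v hv ↦ (hcont.continuousAt.mul (Complex.continuousAt_ofReal_cpow_const v _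
      (.inr (ha.trans_le hv).ne'))).continuousWithinAt)
    (fun v hv ↦ hasDerivWithinAt_mul_cpow_neg (κ := κ) (ha.trans_le hv) (hderiv v)) hW
  refine ⟨c, fun u hu ↦ ?_⟩
  have hu0 : 0 < u := ha.trans_le hu
  have hcancel : (u : ℂ) ^ (-(κ + 1)) * (u : ℂ) ^ (κ + 1) = 1 := by
    rw [← Complex.cpow_add _ _ (by exact_mod_cast hu0.ne'), neg_add_cancel, Complex.cpow_zero]
  calc ‖T u - c * (u : ℂ) ^ (κ + 1)‖
      = ‖T u * (u : ℂ) ^ (-(κ + 1)) - c‖ * u ^ (κ.re + 1) := by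
        rw [← Complex.one_re, ← Complex.add_re, ← Complex.norm_cpow_eq_rpow_re_of_pos hu0,
          ← norm_mul, sub_mul, mul_assoc, hcancel, mul_one]
    _ ≤ C / (κ.re + 1 - β) * u ^ (-(κ.re + 1 - β)) * u ^ (κ.re + 1) := by
        gcongr
        exact hc u hu
    _ = C / (κ.re + 1 - β) * u ^ β := by
        rw [mul_assoc, ← Real.rpow_add hu0, neg_sub, sub_add_cancel]

lemma exists_norm_sub_mul_cpow_le (ha : 0 < a) (hβ : β < κ.re + 1)
    (hcont : Continuous T) (hderiv : ∀ u, HasDerivWithinAt T (M u) (Set.Ici u) u)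
    (hbound : ∀ u, a ≤ u → ‖u * M u - (κ + 1) * T u‖ ≤ C * u ^ β) :
    ∃ c : ℂ, ∀ u : ℝ, a ≤ u →
      ‖M u - c * (u : ℂ) ^ κ‖ ≤ C * (1 + ‖κ + 1‖ / (κ.re + 1 - β)) * u ^ (β - 1) := by
  obtain ⟨c, hc⟩ := exists_norm_sub_mul_cpow_add_one_le ha hβ hcont hderiv hbound
  refine ⟨(κ + 1) * c, fun u hu ↦ ?_⟩
  have hu0 : 0 < u := ha.trans_le hu
  have hu0' : (u : ℂ) ≠ 0 := by exact_mod_cast hu0.ne'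
  have hsplit : M u - (κ + 1) * c * (u : ℂ) ^ κ =
      ((u * M u - (κ + 1) * T u) + (κ + 1) * (T u - c * (u : ℂ) ^ (κ + 1))) / u := by
    rw [Complex.cpow_add _ _ hu0', Complex.cpow_one]
    field_simp
    ring
  rw [hsplit, norm_div, Complex.norm_of_nonneg hu0.le, Real.rpow_sub_one hu0.ne',
    ← mul_div_assoc]
  gcongr
  calc _ ≤ ‖u * M u - (κ + 1) * T u‖ + ‖κ + 1‖ * ‖T u - c * (u : ℂ) ^ (κ + 1)‖ :=
        (norm_add_le _ _).trans_eq (by rw [norm_mul])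
    _ ≤ C * u ^ β + ‖κ + 1‖ * (C / (κ.re + 1 - β) * u ^ β) := by
        gcongr
        exacts [hbound u hu, hc u hu]
    _ = _ := by ring

end Tauberian

section LogSummatory

variable {f : ℕ → ℂ}

lemma logSummatory_exp_eq_sum_max {v b : ℝ} (f : ℕ → ℂ) (hvb : v ≤ b) :
    logSummatory f (Real.exp v) =
      ∑ n ∈ Icc 1 ⌊Real.exp b⌋₊, f n * ((max (v - Real.log n) 0 : ℝ) : ℂ) := by
  have hsub : Icc 1 ⌊Real.exp v⌋₊ ⊆ Icc 1 ⌊Real.exp b⌋₊ := by gcongr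
  rw [logSummatory, Real.log_exp, ← sum_subset hsub fun n hn hnv ↦ ?_]
  · refine sum_congr rfl fun n hn ↦ ?_
    obtain ⟨hn1, hnv⟩ := mem_Icc.1 hn
    have hlog : Real.log n ≤ v := (Real.log_le_iff_le_exp (by exact_mod_cast hn1)).2 <|
      (Nat.le_floor_iff (Real.exp_pos v).le).1 hnv
    rw [max_eq_left (sub_nonneg.2 hlog)]
  · have hn1 := (mem_Icc.1 hn).1
    have hlt : Real.exp v < n := (Nat.floor_lt (Real.exp_pos v).le).1 <|
      not_le.1 fun h ↦ hnv (mem_Icc.2 ⟨hn1, h⟩)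
    have hlog : v < Real.log n := (Real.lt_log_iff_exp_lt (by exact_mod_cast hn1)).2 hlt
    rw [max_eq_right (sub_nonpos.2 hlog.le), Complex.ofReal_zero, mul_zero]

lemma continuous_logSummatory_exp (f : ℕ → ℂ) :
    Continuous fun u ↦ logSummatory f (Real.exp u) := by
  refine continuous_iff_continuousAt.2 fun u ↦ ?_
  have hcont : Continuous fun v : ℝ ↦
      ∑ n ∈ Icc 1 ⌊Real.exp (u + 1)⌋₊, f n * ((max (v - Real.log n) 0 : ℝ) : ℂ) := by
    fun_prop
  refine hcont.continuousAt.congr ?_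
  filter_upwards [Iic_mem_nhds (lt_add_one u)] with v hv
  exact (logSummatory_exp_eq_sum_max f hv).symm

lemma eventually_floor_exp_eq (u : ℝ) :
    ∀ᶠ v in nhdsWithin u (Set.Ici u), ⌊Real.exp v⌋₊ = ⌊Real.exp u⌋₊ := by
  have hlt : ∀ᶠ v in nhds u, Real.exp v < ⌊Real.exp u⌋₊ + 1 :=
    Real.continuous_exp.continuousAt.eventually_lt continuousAt_const (Nat.lt_floor_add_one _)
  filter_upwards [nhdsWithin_le_nhds hlt, self_mem_nhdsWithin] with v hv huv
  exact (Nat.floor_eq_iff (Real.exp_pos v).le).2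
    ⟨(Nat.floor_le (Real.exp_pos u).le).trans (Real.exp_le_exp.2 huv), hv⟩

lemma hasDerivWithinAt_logSummatory_exp (f : ℕ → ℂ) (u : ℝ) :
    HasDerivWithinAt (fun v ↦ logSummatory f (Real.exp v)) (summatory f (Real.exp u))
      (Set.Ici u) u := by
  have hderiv : HasDerivAt
      (fun v : ℝ ↦ ∑ n ∈ Icc 1 ⌊Real.exp u⌋₊, f n * ((v - Real.log n : ℝ) : ℂ))
      (summatory f (Real.exp u)) u :=
    HasDerivAt.fun_sum fun n _ ↦ by
      simpa using (((hasDerivAt_id u).sub_const (Real.log n)).ofReal_comp).const_mul (f n)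
  refine hderiv.hasDerivWithinAt.congr_of_eventuallyEq ?_ (by simp [logSummatory])
  filter_upwards [eventually_floor_exp_eq u] with v hv
  rw [logSummatory, hv, Real.log_exp]

lemma IsMult.exists_norm_summatory_sub_le (hf : IsMult f)
    (hw : Summable fun x : ℕ × ℕ ↦ primePowerWeight f x.1 x.2) {κ : ℂ} {A β D : ℝ}
    (hD : ∀ y : ℝ, 1 ≤ y → ‖primeLogSum f y - κ * Real.log y‖ ≤ D)
    (hA : ∀ x : ℝ, 2 ≤ x → summatory (‖f ·‖) x ≤ A * Real.log x ^ β) (hβ : β < κ.re + 1) :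
    ∃ c : ℂ, ∀ x : ℝ, 2 ≤ x → ‖summatory f x - c * (Real.log x : ℂ) ^ κ‖ ≤
      (∑' p, primeWeight f p + D) * A * (1 + ‖κ + 1‖ / (κ.re + 1 - β)) *
        Real.log x ^ (β - 1) := by
  have hK : 0 ≤ ∑' p, primeWeight f p := tsum_nonneg (primeWeight_nonneg f)
  have hD0 : 0 ≤ D := (norm_nonneg _).trans (hD 1 le_rfl)
  have hbound : ∀ u, Real.log 2 ≤ u →
      ‖u * summatory f (Real.exp u) - (κ + 1) * logSummatory f (Real.exp u)‖ ≤
        (∑' p, primeWeight f p + D) * A * u ^ β := fun u hu ↦ by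
    have hexp : 2 ≤ Real.exp u := (Real.log_le_iff_le_exp two_pos).1 hu
    have hmain := hf.norm_log_mul_summatory_sub_le hw hD (Real.exp_pos u)
    have hsum := hA _ hexp
    rw [Real.log_exp] at hmain hsum
    rw [mul_assoc]
    exact hmain.trans (mul_le_mul_of_nonneg_left hsum (add_nonneg hK hD0))
  obtain ⟨c, hc⟩ := exists_norm_sub_mul_cpow_le (Real.log_pos one_lt_two) hβ
    (continuous_logSummatory_exp f) (hasDerivWithinAt_logSummatory_exp f) hbound
  refine ⟨c, fun x hx ↦ ?_⟩
  have hx0 : 0 < x := by linarith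
  simpa only [Real.exp_log hx0] using hc (Real.log x) (Real.log_le_log two_pos hx)

end LogSummatory

/-! ### Mertens' estimate -/

lemma summable_log_div_mul_sub_one :
    Summable fun n : ℕ ↦ Real.log n / ((n : ℝ) * (n - 1)) := by
  refine .of_norm_bounded ((Real.summable_nat_rpow.2 (show (-(3 / 2) : ℝ) < -1 by
    norm_num)).mul_left 4) fun n ↦ ?_
  obtain hn | hn := lt_or_ge n 2
  · interval_cases n <;> simp
  have hn2 : (2 : ℝ) ≤ n := by exact_mod_cast hn
  have hn0 : (0 : ℝ) < n := by linarith
  have hlog : Real.log n ≤ (n : ℝ) ^ (1 / 2 : ℝ) / (1 / 2) :=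
    Real.log_le_rpow_div hn0.le (by norm_num)
  have hpow : (n : ℝ) ^ (1 / 2 : ℝ) = (n : ℝ) ^ (-(3 / 2) : ℝ) * (n : ℝ) ^ 2 := by
    rw [← Real.rpow_natCast, ← Real.rpow_add hn0]
    norm_num
  have hden : 0 < (n : ℝ) * (n - 1) := by nlinarith
  have hsq : (n : ℝ) ^ (-(3 / 2) : ℝ) * (n : ℝ) ^ 2 ≤
      (n : ℝ) ^ (-(3 / 2) : ℝ) * (2 * (n * (n - 1))) :=
    mul_le_mul_of_nonneg_left (by nlinarith) (by positivity)
  rw [Real.norm_of_nonneg (div_nonneg (Real.log_natCast_nonneg n) hden.le), div_le_iff₀ hden]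
  rw [hpow] at hlog
  linarith

lemma log_factorial_le (N : ℕ) : Real.log N.factorial ≤ N * Real.log N := by
  rw [← Real.log_pow]
  exact Real.log_le_log (by positivity) (by exact_mod_cast N.factorial_le_pow)

lemma sub_le_log_factorial (N : ℕ) : N * Real.log N - N ≤ Real.log N.factorial := by
  obtain rfl | hN := N.eq_zero_or_pos
  · simp
  have hexp := Real.log_le_log (by positivity)
    (Real.pow_div_factorial_le_exp (N : ℝ) N.cast_nonneg N)
  rw [Real.log_exp, Real.log_div (by positivity) (by positivity), Real.log_pow] at hexp
  linarith

lemma log_factorial_eq_sum_primesLE (N : ℕ) : Real.log N.factorial =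
    ∑ p ∈ Nat.primesLE N, (N.factorial.factorization p : ℝ) * Real.log p :=
  log_eq_sum_factorization_mul_log fun _ hp ↦ Nat.mem_primesLE.2
    ⟨(Nat.prime_of_mem_primeFactors hp).dvd_factorial.1 (Nat.dvd_of_mem_primeFactors hp),
      Nat.prime_of_mem_primeFactors hp⟩

lemma div_sub_one_le_factorization_factorial {p : ℕ} (hp : p.Prime) (N : ℕ) :
    (N : ℝ) / p - 1 ≤ N.factorial.factorization p := by
  have hdiv : N / p ≤ N.factorial.factorization p := by
    rw [Nat.factorization_factorial hp (b := Nat.log p N + 2) (by omega)]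
    simpa using single_le_sum (f := fun i ↦ N / p ^ i) (fun _ _ ↦ Nat.zero_le _)
      (show 1 ∈ Ico 1 (Nat.log p N + 2) by simp)
  have hfloor : (N : ℝ) / p < (N / p : ℕ) + 1 := by
    rw [← Nat.floor_div_eq_div (K := ℝ)]
    exact Nat.lt_floor_add_one _
  have hcast : ((N / p : ℕ) : ℝ) ≤ N.factorial.factorization p := by exact_mod_cast hdiv
  linarith

lemma factorization_factorial_le_div_sub_one {p : ℕ} (hp : p.Prime) (N : ℕ) :
    (N.factorial.factorization p : ℝ) ≤ N / (p - 1) :=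
  calc (N.factorial.factorization p : ℝ) ≤ (N / (p - 1) : ℕ) := by
        exact_mod_cast Nat.factorization_factorial_le_div_pred hp N
    _ ≤ (N : ℝ) / (p - 1 : ℕ) := Nat.cast_div_le
    _ = N / (p - 1) := by rw [Nat.cast_sub hp.one_le, Nat.cast_one]

lemma sum_primesLE_log_div_le {N : ℕ} (hN : N ≠ 0) :
    ∑ p ∈ Nat.primesLE N, Real.log p / p ≤ Real.log N + Real.log 4 := by
  have hN0 : (0 : ℝ) < N := by positivity
  have htheta : ∑ p ∈ Nat.primesLE N, Real.log p ≤ Real.log 4 * N :=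
    (Chebyshev.theta_eq_sum_primesLE_log N).symm.trans_le (Chebyshev.theta_le_log4_mul_x hN0.le)
  have hfactorial : N * ∑ p ∈ Nat.primesLE N, Real.log p / p - ∑ p ∈ Nat.primesLE N, Real.log p ≤
      Real.log N.factorial := by
    rw [log_factorial_eq_sum_primesLE, mul_sum, ← sum_sub_distrib]
    refine sum_le_sum fun p hp ↦ ?_
    calc N * (Real.log p / p) - Real.log p = ((N : ℝ) / p - 1) * Real.log p := by ring
      _ ≤ N.factorial.factorization p * Real.log p := by
        gcongr
        exact div_sub_one_le_factorization_factorial (Nat.mem_primesLE.1 hp).2 N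
  refine le_of_mul_le_mul_left ?_ hN0
  linarith [log_factorial_le N]

lemma log_sub_le_sum_primesLE_log_div {N : ℕ} (hN : N ≠ 0) :
    Real.log N - 1 - ∑' n : ℕ, Real.log n / ((n : ℝ) * (n - 1)) ≤
      ∑ p ∈ Nat.primesLE N, Real.log p / p := by
  have hN0 : (0 : ℝ) < N := by positivity
  have hterm : ∀ n : ℕ, 0 ≤ Real.log n / ((n : ℝ) * (n - 1)) := fun n ↦ by
    refine div_nonneg (Real.log_natCast_nonneg n) ?_
    obtain rfl | hn := n.eq_zero_or_pos
    · simp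
    · exact mul_nonneg n.cast_nonneg (sub_nonneg.2 (by exact_mod_cast hn))
  have htail : ∑ p ∈ Nat.primesLE N, Real.log p / ((p : ℝ) * (p - 1)) ≤
      ∑' n : ℕ, Real.log n / ((n : ℝ) * (n - 1)) :=
    summable_log_div_mul_sub_one.sum_le_tsum _ fun n _ ↦ hterm n
  have hfactorial : Real.log N.factorial ≤
      N * ∑ p ∈ Nat.primesLE N, (Real.log p / p + Real.log p / ((p : ℝ) * (p - 1))) := by
    rw [log_factorial_eq_sum_primesLE, mul_sum]
    refine sum_le_sum fun p hp ↦ ?_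
    have hp := (Nat.mem_primesLE.1 hp).2
    have hp1 : (p : ℝ) - 1 ≠ 0 := sub_ne_zero.2 (by exact_mod_cast hp.one_lt.ne')
    have hp0 : (p : ℝ) ≠ 0 := by exact_mod_cast hp.ne_zero
    calc N.factorial.factorization p * Real.log p ≤ N / (p - 1) * Real.log p := by
          gcongr
          exact factorization_factorial_le_div_sub_one hp N
      _ = N * (Real.log p / p + Real.log p / ((p : ℝ) * (p - 1))) := by
          field_simp
          ring
  refine le_of_mul_le_mul_left ?_ hN0
  rw [sum_add_distrib] at hfactorial
  nlinarith [sub_le_log_factorial N]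

lemma exists_abs_sum_primesLE_log_div_sub_log_le :
    ∃ C : ℝ, ∀ N : ℕ, N ≠ 0 → |∑ p ∈ Nat.primesLE N, Real.log p / p - Real.log N| ≤ C := by
  refine ⟨max (Real.log 4) (1 + ∑' n : ℕ, Real.log n / ((n : ℝ) * (n - 1))), fun N hN ↦ ?_⟩
  rw [abs_le']
  exact ⟨le_max_of_le_left (by linarith [sum_primesLE_log_div_le hN]),
    le_max_of_le_right (by linarith [log_sub_le_sum_primesLE_log_div hN])⟩

/-! ### Convergence of `∑_p (f p - κ / p)` -/

lemma exists_tendsto_sum_of_bounded_sum_log_smul {E : Type*} [NormedAddCommGroup E]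
    [NormedSpace ℝ E] [CompleteSpace E] {a : ℕ → E} {C : ℝ}
    (hC : ∀ N : ℕ, ‖∑ n ∈ range N, Real.log n • a n‖ ≤ C) :
    ∃ S, Tendsto (fun N ↦ ∑ n ∈ range N, a n) atTop (nhds S) := by
  have hanti : Antitone fun n : ℕ ↦ (Real.log ((n + 2 : ℕ) : ℝ))⁻¹ := fun m n hmn ↦ by
    have hpos : 0 < Real.log ((m + 2 : ℕ) : ℝ) := Real.log_pos (by norm_cast; omega)
    exact inv_anti₀ hpos (Real.log_le_log (by positivity)
      (by exact_mod_cast Nat.add_le_add_right hmn 2))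
  have hzero : Tendsto (fun n : ℕ ↦ (Real.log ((n + 2 : ℕ) : ℝ))⁻¹) atTop (nhds 0) :=
    (Real.tendsto_log_atTop.comp (tendsto_natCast_atTop_atTop.comp
      (tendsto_add_atTop_nat 2))).inv_tendsto_atTop
  have hshift : ∀ N, ‖∑ n ∈ range N, Real.log ((n + 2 : ℕ) : ℝ) • a (n + 2)‖ ≤ C := fun N ↦ by
    simpa [sum_range_succ', add_assoc, one_add_one_eq_two] using hC (N + 2)
  have hcauchy := hanti.cauchySeq_series_mul_of_tendsto_zero_of_bounded hzero hshift
  obtain ⟨S, hS⟩ := cauchySeq_tendsto_of_complete hcauchy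
  refine ⟨S + (a 0 + a 1), (tendsto_add_atTop_iff_nat 2).1 ?_⟩
  refine (hS.add_const (a 0 + a 1)).congr fun N ↦ ?_
  rw [sum_range_succ', sum_range_succ', add_assoc, add_comm (a (0 + 1))]
  congr 1
  refine sum_congr rfl fun n _ ↦ ?_
  rw [smul_smul, inv_mul_cancel₀ (Real.log_pos (by norm_cast; omega)).ne', one_smul]

/-- The difference `f - κ / n` on the primes, extended by zero to `ℕ`. -/
noncomputable def primeDiff (f : ℕ → ℂ) (κ : ℂ) (n : ℕ) : ℂ :=
  if n.Prime then f n - κ / n else 0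

lemma sum_range_log_smul_primeDiff (f : ℕ → ℂ) (κ : ℂ) (N : ℕ) :
    ∑ n ∈ range (N + 1), Real.log n • primeDiff f κ n =
      (primeLogSum f N - κ * Real.log N) -
        κ * (∑ p ∈ Nat.primesLE N, Real.log p / p - Real.log N : ℝ) := by
  have hprimes : primesLE (N : ℝ) = Nat.primesLE N := by
    rw [primesLE, Nat.floor_natCast]
    rfl
  rw [primeLogSum, hprimes, Complex.ofReal_sub, mul_sub, sub_sub_sub_cancel_right,
    Complex.ofReal_sum, mul_sum, ← sum_sub_distrib, ← hprimes, primesLE, Nat.floor_natCast,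
    sum_filter]
  refine sum_congr rfl fun n _ ↦ ?_
  simp only [primeDiff, smul_ite, smul_zero, Complex.real_smul]
  congr 1
  push_cast
  ring

lemma exists_tendsto_sum_primeDiff {f : ℕ → ℂ} {κ : ℂ} {D : ℝ}
    (hD : ∀ y : ℝ, 1 ≤ y → ‖primeLogSum f y - κ * Real.log y‖ ≤ D) :
    ∃ S, Tendsto (fun N ↦ ∑ n ∈ range N, primeDiff f κ n) atTop (nhds S) := by
  obtain ⟨C, hC⟩ := exists_abs_sum_primesLE_log_div_sub_log_le
  have hD0 : 0 ≤ D := (norm_nonneg _).trans (hD 1 le_rfl)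
  have hC0 : 0 ≤ C := (abs_nonneg _).trans (hC 1 one_ne_zero)
  refine exists_tendsto_sum_of_bounded_sum_log_smul (C := D + ‖κ‖ * C) fun N ↦ ?_
  obtain hN | ⟨N, rfl⟩ : N ≤ 1 ∨ ∃ M, N = M + 1 + 1 := by
    rcases N with _ | _ | N <;> simp
  · rw [sum_eq_zero fun n hn ↦ ?_, norm_zero]
    · positivity
    · obtain rfl : n = 0 := by have := mem_range.1 hn; omega
      simp
  rw [sum_range_log_smul_primeDiff]
  refine norm_sub_le_of_le (hD _ (by simp)) ?_
  rw [norm_mul, Complex.norm_real]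
  exact mul_le_mul_of_nonneg_left (hC _ N.succ_ne_zero) (norm_nonneg κ)

/-! ### An Abelian theorem for Dirichlet series -/

section Abelian

open MeasureTheory Topology

variable {M : ℝ → ℂ} {F : ℕ → ℂ} {κ c : ℂ} {C m s v : ℝ}

lemma div_cpow_mul_cpow_of_pos (hv : 0 < v) (hs : 0 < s) (κ : ℂ) :
    ((v / s : ℝ) : ℂ) ^ κ * (s : ℂ) ^ κ = (v : ℂ) ^ κ := by
  rw [← Complex.mul_cpow_ofReal_nonneg (by positivity) hs.le, ← Complex.ofReal_mul,
    div_mul_cancel₀ _ hs.ne']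

lemma tendsto_cpow_mul_comp_div (hv : 0 < v)
    (hM : Tendsto (fun u : ℝ ↦ M u / (u : ℂ) ^ κ) atTop (𝓝 c)) :
    Tendsto (fun s : ℝ ↦ (s : ℂ) ^ κ * M (v / s)) (𝓝[>] 0) (𝓝 (c * (v : ℂ) ^ κ)) := by
  have hdiv : Tendsto (fun s : ℝ ↦ v / s) (𝓝[>] 0) atTop := by
    simpa only [div_eq_mul_inv] using tendsto_inv_nhdsGT_zero.const_mul_atTop hv
  refine ((hM.comp hdiv).mul_const ((v : ℂ) ^ κ)).congr' ?_
  filter_upwards [self_mem_nhdsWithin] with s hs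
  have hne : ((v / s : ℝ) : ℂ) ^ κ ≠ 0 := by
    simp [Complex.cpow_eq_zero_iff, hv.ne', (Set.mem_Ioi.1 hs).ne']
  rw [Function.comp_apply, ← div_cpow_mul_cpow_of_pos hv hs, ← mul_assoc, div_mul_cancel₀ _ hne,
    mul_comm]

lemma norm_cpow_mul_comp_div_le (hmκ : m ≤ κ.re)
    (hM : ∀ u : ℝ, 0 < u → ‖M u‖ ≤ C * (u ^ κ.re + u ^ m)) (hs : 0 < s) (hs1 : s ≤ 1)
    (hv : 0 < v) : ‖(s : ℂ) ^ κ * M (v / s)‖ ≤ C * (v ^ κ.re + v ^ m) := by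
  have hC : 0 ≤ C :=
    nonneg_of_mul_nonneg_left ((norm_nonneg _).trans (hM 1 one_pos)) (by simp)
  rw [norm_mul, Complex.norm_cpow_eq_rpow_re_of_pos hs]
  calc s ^ κ.re * ‖M (v / s)‖ ≤ s ^ κ.re * (C * ((v / s) ^ κ.re + (v / s) ^ m)) := by
        gcongr
        exact hM _ (div_pos hv hs)
    _ = C * (v ^ κ.re + v ^ m * (s ^ κ.re / s ^ m)) := by
        rw [Real.div_rpow hv.le hs.le, Real.div_rpow hv.le hs.le]
        field_simp
    _ ≤ C * (v ^ κ.re + v ^ m) := by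
        gcongr
        exact mul_le_of_le_one_right (by positivity) <| (div_le_one (by positivity)).2 <|
          Real.rpow_le_rpow_of_exponent_ge hs hs1 hmκ

lemma integrableOn_rpow_mul_exp_neg {a : ℝ} (ha : -1 < a) :
    IntegrableOn (fun v : ℝ ↦ v ^ a * Real.exp (-v)) (Set.Ioi 0) := by
  simpa [mul_comm] using Real.GammaIntegral_convergent (s := a + 1) (by linarith)

lemma tendsto_cpow_mul_integral_comp_div (hmeas : Measurable M) (hm : -1 < m) (hmκ : m ≤ κ.re)
    (hbound : ∀ u : ℝ, 0 < u → ‖M u‖ ≤ C * (u ^ κ.re + u ^ m))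
    (hM : Tendsto (fun u : ℝ ↦ M u / (u : ℂ) ^ κ) atTop (𝓝 c)) :
    Tendsto (fun s : ℝ ↦ (s : ℂ) ^ κ * ∫ v in Set.Ioi (0 : ℝ), M (v / s) * Real.exp (-v))
      (𝓝[>] 0) (𝓝 (c * Complex.Gamma (κ + 1))) := by
  have hΓ : c * Complex.Gamma (κ + 1) =
      ∫ v in Set.Ioi (0 : ℝ), c * (v : ℂ) ^ κ * Real.exp (-v) := by
    rw [Complex.Gamma_eq_integral (by simp only [Complex.add_re, Complex.one_re]; linarith),
      Complex.GammaIntegral, ← integral_const_mul]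
    simp only [add_sub_cancel_right, mul_assoc, mul_comm]
  simp_rw [hΓ, ← integral_const_mul, ← mul_assoc]
  refine tendsto_integral_filter_of_dominated_convergence
    (fun v ↦ C * (v ^ κ.re * Real.exp (-v) + v ^ m * Real.exp (-v))) ?_ ?_ ?_ ?_
  · refine Eventually.of_forall fun s ↦ Measurable.aestronglyMeasurable ?_
    exact ((hmeas.comp (measurable_id.div_const s)).const_mul _).mul (by fun_prop)
  · filter_upwards [Ioc_mem_nhdsGT one_pos] with s hs
    refine (ae_restrict_iff' measurableSet_Ioi).2 (Eventually.of_forall fun v hv ↦ ?_)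
    rw [norm_mul, Complex.norm_of_nonneg (Real.exp_pos _).le, ← add_mul, ← mul_assoc]
    gcongr
    exact norm_cpow_mul_comp_div_le hmκ hbound hs.1 hs.2 hv
  · exact ((integrableOn_rpow_mul_exp_neg (hm.trans_le hmκ)).add
      (integrableOn_rpow_mul_exp_neg hm)).const_mul C
  · exact (ae_restrict_iff' measurableSet_Ioi).2 <| Eventually.of_forall fun v hv ↦
      (tendsto_cpow_mul_comp_div hv hM).mul_const _

lemma measurable_summatory_exp (F : ℕ → ℂ) : Measurable fun u ↦ summatory F (Real.exp u) :=
  (measurable_from_top (f := fun n ↦ ∑ k ∈ Icc 1 n, F k)).comp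
    (Nat.measurable_floor.comp Real.measurable_exp)

lemma norm_summatory_le_summatory_norm {x y : ℝ} (F : ℕ → ℂ) (hxy : x ≤ y) :
    ‖summatory F x‖ ≤ summatory (‖F ·‖) y :=
  (norm_sum_le _ _).trans <| sum_le_sum_of_subset_of_nonneg (by gcongr) fun _ _ _ ↦ norm_nonneg _

lemma exists_norm_summatory_exp_le (hm : m ≤ 0)
    (hF : Tendsto (fun u : ℝ ↦ summatory F (Real.exp u) / (u : ℂ) ^ κ) atTop (𝓝 c)) :
    ∃ C : ℝ, ∀ u : ℝ, 0 < u → ‖summatory F (Real.exp u)‖ ≤ C * (u ^ κ.re + u ^ m) := by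
  obtain ⟨U, hU⟩ := eventually_atTop.1
    ((hF.norm.eventually_lt_const (lt_add_one ‖c‖)).and (eventually_gt_atTop 0))
  have hU0 : 0 < U := (hU U le_rfl).2
  set B := summatory (‖F ·‖) (Real.exp U)
  have hB : 0 ≤ B := sum_nonneg fun _ _ ↦ norm_nonneg _
  refine ⟨max (‖c‖ + 1) (B / U ^ m), fun u hu ↦ ?_⟩
  have hC : 0 ≤ max (‖c‖ + 1) (B / U ^ m) := le_max_of_le_left (by positivity)
  obtain h | h := le_total U u
  · have hlt := (hU u h).1
    rw [norm_div, Complex.norm_cpow_eq_rpow_re_of_pos hu, div_lt_iff₀ (by positivity)] at hlt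
    refine hlt.le.trans (mul_le_mul (le_max_left _ _) ?_ (by positivity) hC)
    exact le_add_of_nonneg_right (by positivity)
  · calc ‖summatory F (Real.exp u)‖ ≤ B :=
          norm_summatory_le_summatory_norm F (Real.exp_le_exp.2 h)
      _ = B / U ^ m * U ^ m := (div_mul_cancel₀ _ (by positivity)).symm
      _ ≤ B / U ^ m * u ^ m := mul_le_mul_of_nonneg_left
          (Real.rpow_le_rpow_of_nonpos hu h hm) (by positivity)
      _ ≤ max (‖c‖ + 1) (B / U ^ m) * (u ^ κ.re + u ^ m) :=
          mul_le_mul (le_max_right _ _) (le_add_of_nonneg_left (by positivity))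
            (by positivity) hC

lemma image_exp_div_Ioi (hs : 0 < s) : (fun v ↦ Real.exp (v / s)) '' Set.Ioi 0 = Set.Ioi 1 := by
  ext t
  simp only [Set.mem_image, Set.mem_Ioi]
  constructor
  · rintro ⟨v, hv, rfl⟩
    exact Real.one_lt_exp_iff.2 (div_pos hv hs)
  · intro ht
    exact ⟨s * Real.log t, mul_pos hs (Real.log_pos ht),
      by rw [mul_div_cancel_left₀ _ hs.ne', Real.exp_log (one_pos.trans ht)]⟩

lemma integral_mul_cpow_eq_integral_exp {G : ℝ → ℂ} (hs : 0 < s) :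
    s * ∫ t in Set.Ioi (1 : ℝ), G t * (t : ℂ) ^ (-(s + 1) : ℂ) =
      ∫ v in Set.Ioi (0 : ℝ), G (Real.exp (v / s)) * Real.exp (-v) := by
  have hinj : Set.InjOn (fun v ↦ Real.exp (v / s)) (Set.Ioi 0) := fun a _ b _ hab ↦
    (div_left_inj' hs.ne').1 (Real.exp_injective hab)
  rw [← image_exp_div_Ioi hs, integral_image_eq_integral_abs_deriv_smul measurableSet_Ioi
    (fun v _ ↦ (((hasDerivAt_id' v).div_const s).exp).hasDerivWithinAt) hinj,
    ← integral_const_mul]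
  refine setIntegral_congr_fun measurableSet_Ioi fun v _ ↦ ?_
  have hpow : ((Real.exp (v / s) : ℝ) : ℂ) ^ (-(s + 1) : ℂ) =
      (Real.exp (-v) / Real.exp (v / s) : ℝ) := by
    rw [show (-(s + 1) : ℂ) = (-(s + 1) : ℝ) by push_cast; ring,
      ← Complex.ofReal_cpow (Real.exp_pos _).le, ← Real.exp_mul, ← Real.exp_sub]
    congr 2
    field_simp
    ring
  have hs0 : (s : ℂ) ≠ 0 := by exact_mod_cast hs.ne'
  have hexp : ((Real.exp (v / s) : ℝ) : ℂ) ≠ 0 := by exact_mod_cast (Real.exp_pos _).ne'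
  rw [abs_of_pos (by positivity), Complex.real_smul, hpow, Complex.ofReal_mul,
    Complex.ofReal_div, Complex.ofReal_div, Complex.ofReal_one]
  field_simp

lemma isBigO_summatory_natCast {r : ℝ} (hr : 0 < r)
    (hbound : ∀ u : ℝ, 0 < u → ‖summatory F (Real.exp u)‖ ≤ C * (u ^ κ.re + u ^ m)) :
    (fun n : ℕ ↦ ∑ k ∈ Icc 1 n, F k) =O[atTop] fun n : ℕ ↦ (n : ℝ) ^ r := by
  have hlog : ∀ a : ℝ, (fun n : ℕ ↦ Real.log n ^ a) =O[atTop] fun n : ℕ ↦ (n : ℝ) ^ r :=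
    fun a ↦ ((isLittleO_log_rpow_rpow_atTop a hr).comp_tendsto
      tendsto_natCast_atTop_atTop).isBigO
  refine Asymptotics.IsBigO.trans (.of_bound |C| ?_) ((hlog κ.re).add (hlog m))
  filter_upwards [eventually_ge_atTop 2] with n hn
  have hn1 : (1 : ℝ) < n := by exact_mod_cast hn
  have hsum := hbound _ (Real.log_pos hn1)
  rw [Real.exp_log (by linarith), summatory, Nat.floor_natCast] at hsum
  refine hsum.trans ((le_abs_self _).trans_eq ?_)
  rw [abs_mul, Real.norm_eq_abs]

lemma tendsto_cpow_mul_LSeries (hκ : -1 < κ.re)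
    (hsummable : ∀ s : ℝ, 0 < s → LSeriesSummable F s)
    (hF : Tendsto (fun x : ℝ ↦ summatory F x / (Real.log x : ℂ) ^ κ) atTop (𝓝 c)) :
    Tendsto (fun s : ℝ ↦ (s : ℂ) ^ κ * LSeries F s) (𝓝[>] 0)
      (𝓝 (c * Complex.Gamma (κ + 1))) := by
  have hexp : Tendsto (fun u : ℝ ↦ summatory F (Real.exp u) / (u : ℂ) ^ κ) atTop (𝓝 c) := by
    simpa only [Function.comp_def, Real.log_exp] using hF.comp Real.tendsto_exp_atTop
  obtain ⟨C, hC⟩ := exists_norm_summatory_exp_le (min_le_right κ.re 0) hexp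
  refine (tendsto_cpow_mul_integral_comp_div (measurable_summatory_exp F)
    (lt_min hκ neg_one_lt_zero) (min_le_left _ _) hC hexp).congr' ?_
  filter_upwards [self_mem_nhdsWithin] with s hs
  have hs0 : 0 < s := hs
  rw [LSeries_eq_mul_integral F (half_pos hs0).le (by simpa using hs0) (hsummable s hs0)
    (isBigO_summatory_natCast (half_pos hs0) hC), ← integral_mul_cpow_eq_integral_exp hs0]
  rfl

end Abelian

/-! ### Euler products -/

section EulerProduct

open Topology

lemma norm_one_add_add_mul_exp_neg_sub_one_le {a t : ℂ} {B : ℝ} (ha : ‖a‖ ≤ B) :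
    ‖(1 + a + t) * Complex.exp (-a) - 1‖ ≤ (B + 2) * Real.exp B * (‖a‖ ^ 2 + ‖t‖) := by
  have hB : 0 ≤ B := (norm_nonneg a).trans ha
  have htaylor : ‖Complex.exp (-a) - (1 + -a)‖ ≤ ‖a‖ ^ 2 * Real.exp B := by
    have h := Complex.norm_exp_sub_sum_le_norm_mul_exp (-a) 2
    simp only [sum_range_succ, range_zero, sum_empty, pow_zero, Nat.factorial, Nat.cast_one,
      div_one, zero_add, pow_one, mul_one, norm_neg] at h
    exact h.trans (by gcongr)
  have hexp : ‖Complex.exp (-a)‖ ≤ Real.exp B :=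
    (Complex.norm_exp_le_exp_norm _).trans (Real.exp_le_exp.2 (by rwa [norm_neg]))
  calc ‖(1 + a + t) * Complex.exp (-a) - 1‖
      = ‖(Complex.exp (-a) - (1 + -a)) * (1 + a) - a ^ 2 + t * Complex.exp (-a)‖ := by ring_nf
    _ ≤ ‖a‖ ^ 2 * Real.exp B * (1 + B) + ‖a‖ ^ 2 + ‖t‖ * Real.exp B := by
        refine norm_add_le_of_le (norm_sub_le_of_le ?_ (norm_pow_le _ _)) ?_
        · exact norm_mul_le_of_le htaylor (norm_add_le_of_le norm_one.le ha)
        · exact norm_mul_le_of_le le_rfl hexp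
    _ ≤ (B + 2) * Real.exp B * (‖a‖ ^ 2 + ‖t‖) := by
        have ht : ‖t‖ * Real.exp B ≤ (B + 2) * Real.exp B * ‖t‖ := by
          nlinarith [mul_nonneg (norm_nonneg t) (Real.exp_pos B).le]
        nlinarith [mul_le_mul_of_nonneg_left (Real.one_le_exp hB) (sq_nonneg ‖a‖)]

lemma norm_one_sub_cpow_mul_exp_sub_one_le {z : ℂ} (hz : ‖z‖ ≤ 1 / 2) (κ : ℂ) :
    ‖(1 - z) ^ κ * Complex.exp (κ * z) - 1‖ ≤ ‖κ‖ * Real.exp ‖κ‖ * ‖z‖ ^ 2 := by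
  set w := κ * (Complex.log (1 + -z) - -z) with hw
  have hne : 1 - z ≠ 0 := by
    rw [sub_ne_zero]
    rintro rfl
    norm_num at hz
  have hpow : (1 - z) ^ κ * Complex.exp (κ * z) = Complex.exp w := by
    rw [Complex.cpow_def_of_ne_zero hne, ← Complex.exp_add, hw]
    ring_nf
  have hlog : ‖Complex.log (1 + -z) - -z‖ ≤ ‖z‖ ^ 2 := by
    refine (Complex.norm_log_one_add_sub_self_le (by rw [norm_neg]; linarith)).trans ?_
    have hinv : (1 - ‖z‖)⁻¹ ≤ 2 := by
      rw [inv_le_comm₀ (by linarith) two_pos]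
      linarith
    rw [norm_neg]
    nlinarith [sq_nonneg ‖z‖]
  have hwz : ‖w‖ ≤ ‖κ‖ * ‖z‖ ^ 2 := norm_mul_le_of_le le_rfl hlog
  have hwκ : ‖w‖ ≤ ‖κ‖ := hwz.trans <|
    mul_le_of_le_one_right (norm_nonneg κ) (by nlinarith [norm_nonneg z])
  have hexp := Complex.norm_exp_sub_sum_le_norm_mul_exp w 1
  simp only [range_one, sum_singleton, pow_zero, Nat.factorial, Nat.cast_one, div_one,
    pow_one] at hexp
  rw [hpow]
  calc ‖Complex.exp w - 1‖ ≤ ‖κ‖ * ‖z‖ ^ 2 * Real.exp ‖κ‖ := hexp.trans (by gcongr)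
    _ = ‖κ‖ * Real.exp ‖κ‖ * ‖z‖ ^ 2 := by ring

lemma norm_one_sub_cpow_mul_one_add_mul_exp_sub_one_le {a t z : ℂ} {B : ℝ} (ha : ‖a‖ ≤ B)
    (hz : ‖z‖ ≤ 1 / 2) (κ : ℂ) :
    ‖(1 - z) ^ κ * (1 + a + t) * Complex.exp (-(a - κ * z)) - 1‖ ≤
      (1 + ‖κ‖ * Real.exp ‖κ‖) * ((B + 2) * Real.exp B) * (‖a‖ ^ 2 + ‖z‖ ^ 2 + ‖t‖) := by
  have hB : 0 ≤ B := (norm_nonneg a).trans ha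
  have hone : 1 ≤ (B + 2) * Real.exp B := by nlinarith [Real.one_le_exp hB]
  set u := (1 - z) ^ κ * Complex.exp (κ * z) with hu
  set v := (1 + a + t) * Complex.exp (-a) with hv
  set E := ‖κ‖ * Real.exp ‖κ‖
  have hE : 0 ≤ E := by positivity
  have hu1 : ‖u - 1‖ ≤ E * ‖z‖ ^ 2 := norm_one_sub_cpow_mul_exp_sub_one_le hz κ
  have hu_norm : ‖u‖ ≤ 1 + E := by
    have hle : E * ‖z‖ ^ 2 ≤ E := mul_le_of_le_one_right hE (by nlinarith [norm_nonneg z])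
    calc ‖u‖ ≤ ‖(1 : ℂ)‖ + ‖u - 1‖ := norm_le_norm_add_norm_sub' u 1
      _ ≤ 1 + E := add_le_add norm_one.le (hu1.trans hle)
  have huv : (1 - z) ^ κ * (1 + a + t) * Complex.exp (-(a - κ * z)) - 1 =
      u * (v - 1) + (u - 1) := by
    rw [hu, hv, neg_sub, sub_eq_add_neg (κ * z), Complex.exp_add]
    ring
  rw [huv]
  calc ‖u * (v - 1) + (u - 1)‖
      ≤ (1 + E) * ((B + 2) * Real.exp B * (‖a‖ ^ 2 + ‖t‖)) + E * ‖z‖ ^ 2 :=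
        norm_add_le_of_le (norm_mul_le_of_le hu_norm
          (norm_one_add_add_mul_exp_neg_sub_one_le ha)) hu1
    _ ≤ (1 + E) * ((B + 2) * Real.exp B * (‖a‖ ^ 2 + ‖t‖)) +
          (1 + E) * ((B + 2) * Real.exp B) * ‖z‖ ^ 2 := by
        gcongr
        nlinarith
    _ = _ := by ring

variable {f : ℕ → ℂ} {κ S : ℂ} {A β s : ℝ} {p : ℕ}

lemma primePowerWeight_le_of_norm_le {g : ℕ → ℂ} (h : ∀ n, ‖f n‖ ≤ ‖g n‖) (p r : ℕ) :
    primePowerWeight f p r ≤ primePowerWeight g p r := by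
  unfold primePowerWeight
  split_ifs
  · gcongr <;> apply h
  · rfl

lemma summable_primePowerWeight_of_norm_le {g : ℕ → ℂ} (h : ∀ n, ‖f n‖ ≤ ‖g n‖)
    (hw : Summable fun x : ℕ × ℕ ↦ primePowerWeight g x.1 x.2) :
    Summable fun x : ℕ × ℕ ↦ primePowerWeight f x.1 x.2 :=
  .of_nonneg_of_le (fun _ ↦ primePowerWeight_nonneg _ _ _)
    (fun _ ↦ primePowerWeight_le_of_norm_le h _ _) hw

lemma tsum_primeWeight_le_of_norm_le {g : ℕ → ℂ} (h : ∀ n, ‖f n‖ ≤ ‖g n‖)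
    (hw : Summable fun x : ℕ × ℕ ↦ primePowerWeight g x.1 x.2) :
    ∑' p, primeWeight f p ≤ ∑' p, primeWeight g p := by
  have hwf := summable_primePowerWeight_of_norm_le h hw
  refine (summable_primeWeight hwf).tsum_le_tsum (fun p ↦ ?_) (summable_primeWeight hw)
  exact (hwf.prod_factor p).tsum_le_tsum (fun r ↦ primePowerWeight_le_of_norm_le h p r)
    (hw.prod_factor p)

lemma IsMult.norm_one_sub_cpow_mul_tsum_mul_exp_sub_one_le (hf : IsMult f)
    (hw : Summable fun x : ℕ × ℕ ↦ primePowerWeight f x.1 x.2) {B : ℝ}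
    (hB : ∑' p, primeWeight f p ≤ B) (hp : p.Prime) {z : ℂ} (hz : ‖z‖ ≤ (p : ℝ)⁻¹) (κ : ℂ) :
    ‖(1 - z) ^ κ * (∑' r, f (p ^ r)) * Complex.exp (-(f p - κ * z)) - 1‖ ≤
      (1 + ‖κ‖ * Real.exp ‖κ‖) * ((2 * B + 3) * Real.exp (2 * B + 1)) *
        (3 * primeWeight f p + ((p : ℝ) ^ 2)⁻¹) := by
  have hB0 : 0 ≤ B := (tsum_nonneg (primeWeight_nonneg f)).trans hB
  have hsq := sq_norm_prime_le_primeWeight hw hp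
  have htail := (norm_tsum_le_tsum_norm (summable_norm_prime_pow_add_two hw hp)).trans
    (tsum_norm_prime_pow_add_two_le hw hp)
  have hfp : ‖f p‖ ≤ 2 * B + 1 := by
    have hle := (summable_primeWeight hw).le_tsum p fun j _ ↦ primeWeight_nonneg f j
    nlinarith [sq_nonneg (‖f p‖ - 1)]
  have hp2 : (p : ℝ)⁻¹ ≤ 1 / 2 := by
    rw [one_div]
    exact inv_anti₀ two_pos (by exact_mod_cast hp.two_le)
  have hsplit : ∑' r, f (p ^ r) = 1 + f p + ∑' r, f (p ^ (r + 2)) := by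
    rw [← (summable_norm_prime_pow hw hp).of_norm.sum_add_tsum_nat_add 2]
    simp [sum_range_succ, hf.1]
  rw [hsplit]
  refine (norm_one_sub_cpow_mul_one_add_mul_exp_sub_one_le hfp (hz.trans hp2) κ).trans ?_
  have hz2 : ‖z‖ ^ 2 ≤ ((p : ℝ) ^ 2)⁻¹ := by
    rw [← inv_pow]
    gcongr
  rw [show 2 * B + 1 + 2 = 2 * B + 3 by ring]
  exact mul_le_mul_of_nonneg_left (by linarith) (by positivity)

lemma norm_term_le_norm (f : ℕ → ℂ) (hs : 0 ≤ s) (n : ℕ) : ‖LSeries.term f s n‖ ≤ ‖f n‖ := by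
  refine (LSeries.norm_term_le_of_re_le_re (s := 0) f (by simpa using hs) n).trans ?_
  rw [LSeries.norm_term_eq, Complex.zero_re, Real.rpow_zero, div_one]
  split_ifs
  · exact norm_nonneg _
  · rfl

lemma continuous_term (f : ℕ → ℂ) (n : ℕ) : Continuous fun s : ℝ ↦ LSeries.term f s n := by
  obtain rfl | hn := eq_or_ne n 0
  · simpa only [LSeries.term_zero] using continuous_const
  have hn' : (n : ℂ) ≠ 0 := by exact_mod_cast hn
  simp only [LSeries.term_of_ne_zero hn]
  exact continuous_const.div (Continuous.const_cpow (by fun_prop) (.inl hn'))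
    fun s ↦ by simp [Complex.cpow_eq_zero_iff, hn']

lemma IsMult.term (hf : IsMult f) (s : ℂ) : IsMult (LSeries.term f s) := by
  refine ⟨by simp [LSeries.term_of_ne_zero, hf.1], fun m n hmn ↦ ?_⟩
  obtain rfl | hm := eq_or_ne m 0
  · simp
  obtain rfl | hn := eq_or_ne n 0
  · simp
  rw [LSeries.term_of_ne_zero (mul_ne_zero hm hn), LSeries.term_of_ne_zero hm,
    LSeries.term_of_ne_zero hn, hf.2 m n hmn, Nat.cast_mul, Complex.natCast_mul_natCast_cpow,
    mul_div_mul_comm]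

/-- The Euler factor at `p` of `L(f, s) / ζ(1 + s) ^ κ`. -/
noncomputable def relativeEulerFactor (f : ℕ → ℂ) (κ : ℂ) (s : ℝ) (p : ℕ) : ℂ :=
  ((1 - (p : ℝ) ^ (-(1 + s)) : ℝ) : ℂ) ^ κ * ∑' r, LSeries.term f s (p ^ r)

/-- The relative error of the first-order approximation `exp ((f p - κ / p) / p ^ s)` to
`relativeEulerFactor f κ s p`, extended by zero to all `p`. -/
noncomputable def eulerCorrection (f : ℕ → ℂ) (κ : ℂ) (s : ℝ) (p : ℕ) : ℂ :=
  if p.Prime then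
    relativeEulerFactor f κ s p * Complex.exp (-LSeries.term (primeDiff f κ) s p) - 1
  else 0

lemma term_primeDiff_of_prime (hp : p.Prime) (f : ℕ → ℂ) (κ : ℂ) (s : ℝ) :
    LSeries.term (primeDiff f κ) s p =
      LSeries.term f s p - κ * ((p : ℝ) ^ (-(1 + s)) : ℝ) := by
  have hp0 : (p : ℂ) ≠ 0 := by exact_mod_cast hp.ne_zero
  rw [LSeries.term_of_ne_zero hp.ne_zero, LSeries.term_of_ne_zero hp.ne_zero, primeDiff,
    if_pos hp, Complex.ofReal_cpow p.cast_nonneg, sub_div, div_div]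
  push_cast
  rw [neg_add, Complex.cpow_add _ _ hp0, Complex.cpow_neg_one, Complex.cpow_neg, ← mul_inv,
    div_eq_mul_inv κ]

lemma IsMult.exists_norm_eulerCorrection_le (hf : IsMult f)
    (hw : Summable fun x : ℕ × ℕ ↦ primePowerWeight f x.1 x.2) (κ : ℂ) :
    ∃ C : ℝ, ∀ s : ℝ, 0 ≤ s → ∀ p,
      ‖eulerCorrection f κ s p‖ ≤ C * (3 * primeWeight f p + ((p : ℝ) ^ 2)⁻¹) := by
  set B := ∑' p, primeWeight f p
  have hB : 0 ≤ B := tsum_nonneg (primeWeight_nonneg f)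
  refine ⟨(1 + ‖κ‖ * Real.exp ‖κ‖) * ((2 * B + 3) * Real.exp (2 * B + 1)), fun s hs p ↦ ?_⟩
  have hle := norm_term_le_norm f hs
  have hws := summable_primePowerWeight_of_norm_le hle hw
  rw [eulerCorrection]
  split_ifs with hp
  · have hz : ‖(((p : ℝ) ^ (-(1 + s)) : ℝ) : ℂ)‖ ≤ (p : ℝ)⁻¹ := by
      rw [Complex.norm_of_nonneg (by positivity), ← Real.rpow_neg_one]
      exact Real.rpow_le_rpow_of_exponent_le (by exact_mod_cast hp.one_lt.le) (by linarith)
    have hweight : primeWeight (LSeries.term f s) p ≤ primeWeight f p :=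
      (hws.prod_factor p).tsum_le_tsum (fun r ↦ primePowerWeight_le_of_norm_le hle p r)
        (hw.prod_factor p)
    rw [term_primeDiff_of_prime hp, relativeEulerFactor, Complex.ofReal_sub, Complex.ofReal_one]
    refine ((hf.term s).norm_one_sub_cpow_mul_tsum_mul_exp_sub_one_le hws
      (tsum_primeWeight_le_of_norm_le hle hw) hp hz κ).trans ?_
    gcongr
  · have := primeWeight_nonneg f p
    rw [norm_zero]
    positivity

lemma summable_primeWeight_add_inv_sq
    (hw : Summable fun x : ℕ × ℕ ↦ primePowerWeight f x.1 x.2) (C : ℝ) :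
    Summable fun p : ℕ ↦ C * (3 * primeWeight f p + ((p : ℝ) ^ 2)⁻¹) :=
  (((summable_primeWeight hw).mul_left 3).add
    (Real.summable_nat_pow_inv.2 one_lt_two)).mul_left C

lemma tendsto_tsum_term_prime_pow (hw : Summable fun x : ℕ × ℕ ↦ primePowerWeight f x.1 x.2)
    (hp : p.Prime) : Tendsto (fun s : ℝ ↦ ∑' r, LSeries.term f s (p ^ r)) (𝓝[>] 0)
      (𝓝 (∑' r, LSeries.term f (0 : ℝ) (p ^ r))) := by
  refine tendsto_tsum_of_dominated_convergence (summable_norm_prime_pow hw hp)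
    (fun r ↦ ((continuous_term f _).tendsto 0).mono_left nhdsWithin_le_nhds) ?_
  filter_upwards [self_mem_nhdsWithin] with s hs r
  exact norm_term_le_norm f (le_of_lt hs) _

lemma tendsto_eulerCorrection (hw : Summable fun x : ℕ × ℕ ↦ primePowerWeight f x.1 x.2)
    (κ : ℂ) (p : ℕ) :
    Tendsto (fun s ↦ eulerCorrection f κ s p) (𝓝[>] 0) (𝓝 (eulerCorrection f κ 0 p)) := by
  unfold eulerCorrection
  split_ifs with hp
  swap
  · exact tendsto_const_nhds
  have hp0 : (p : ℝ) ≠ 0 := by exact_mod_cast hp.ne_zero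
  refine Tendsto.sub_const (Tendsto.mul (Tendsto.mul ?_ (tendsto_tsum_term_prime_pow hw hp))
    (((continuous_term _ _).neg.cexp.tendsto 0).mono_left nhdsWithin_le_nhds)) _
  have hcont : Continuous fun s : ℝ ↦ 1 - (p : ℝ) ^ (-(1 + s)) :=
    continuous_const.sub (continuous_const.rpow (by fun_prop) fun _ ↦ .inl hp0)
  refine (((Complex.continuous_ofReal.comp hcont).tendsto 0).mono_left
    nhdsWithin_le_nhds).cpow tendsto_const_nhds ?_
  rw [Function.comp_apply, Complex.ofReal_mem_slitPlane, sub_pos]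
  exact Real.rpow_lt_one_of_one_lt_of_neg (by exact_mod_cast hp.one_lt) (by norm_num)

lemma IsMult.tendsto_tprod_eulerCorrection (hf : IsMult f)
    (hw : Summable fun x : ℕ × ℕ ↦ primePowerWeight f x.1 x.2) (κ : ℂ) :
    Tendsto (fun s ↦ ∏' p, (1 + eulerCorrection f κ s p)) (𝓝[>] 0)
      (𝓝 (∏' p, (1 + eulerCorrection f κ 0 p))) := by
  obtain ⟨C, hC⟩ := hf.exists_norm_eulerCorrection_le hw κ
  refine tendsto_tprod_one_add_of_dominated_convergence (summable_primeWeight_add_inv_sq hw C)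
    (tendsto_eulerCorrection hw κ) ?_
  filter_upwards [self_mem_nhdsWithin] with s hs
  exact hC s (le_of_lt hs)

lemma IsMult.tendsto_prod_relativeEulerFactor (hf : IsMult f)
    (hw : Summable fun x : ℕ × ℕ ↦ primePowerWeight f x.1 x.2) (hs : 0 ≤ s)
    (hS : Tendsto (fun N ↦ ∑ n ∈ range N, LSeries.term (primeDiff f κ) s n) atTop (𝓝 S)) :
    Tendsto (fun N : ℕ ↦ ∏ p ∈ N.primesBelow, relativeEulerFactor f κ s p) atTop
      (𝓝 ((∏' p, (1 + eulerCorrection f κ s p)) * Complex.exp S)) := by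
  obtain ⟨C, hC⟩ := hf.exists_norm_eulerCorrection_le hw κ
  have hmult : Multipliable fun p ↦ 1 + eulerCorrection f κ s p :=
    multipliable_one_add_of_summable <| (summable_primeWeight_add_inv_sq hw C).of_nonneg_of_le
      (fun _ ↦ norm_nonneg _) (hC s hs)
  refine (hmult.hasProd.tendsto_prod_nat.mul hS.cexp).congr fun N ↦ ?_
  rw [Complex.exp_sum, ← prod_mul_distrib, Nat.primesBelow, prod_filter]
  refine prod_congr rfl fun p _ ↦ ?_
  rw [eulerCorrection]
  split_ifs with hp
  · rw [add_sub_cancel, mul_assoc, ← Complex.exp_add, neg_add_cancel, Complex.exp_zero, mul_one]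
  · simp [LSeries.term, primeDiff, hp]

lemma prod_ofReal_cpow {ι : Type*} (t : Finset ι) {r : ι → ℝ} (hr : ∀ i ∈ t, 0 ≤ r i) (κ : ℂ) :
    ∏ i ∈ t, (r i : ℂ) ^ κ = ((∏ i ∈ t, r i : ℝ) : ℂ) ^ κ := by
  induction t using Finset.cons_induction with
  | empty => simp
  | cons a t ha ih =>
    rw [forall_mem_cons] at hr
    rw [prod_cons, prod_cons, ih hr.2, Complex.ofReal_mul,
      Complex.mul_cpow_ofReal_nonneg hr.1 (prod_nonneg hr.2)]

lemma tsum_one_div_rpow_one_add_pos (hs : 0 < s) : 0 < ∑' n : ℕ, 1 / (n : ℝ) ^ (1 + s) :=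
  (Real.summable_one_div_nat_rpow.2 (by linarith)).tsum_pos (fun n ↦ by positivity) 1 (by simp)

lemma tendsto_prod_one_sub_rpow (hs : 0 < s) :
    Tendsto (fun N : ℕ ↦ ∏ p ∈ N.primesBelow, (1 - (p : ℝ) ^ (-(1 + s)))) atTop
      (𝓝 (∑' n : ℕ, 1 / (n : ℝ) ^ (1 + s))⁻¹) := by
  let pow : ℕ →*₀ ℝ :=
    { toFun n := 1 / (n : ℝ) ^ (1 + s)
      map_zero' := by simp [Real.zero_rpow (by linarith : 1 + s ≠ 0)]
      map_one' := by simp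
      map_mul' m n := by
        rw [Nat.cast_mul, Real.mul_rpow m.cast_nonneg n.cast_nonneg, one_div_mul_one_div] }
  have hsum : Summable pow := Real.summable_one_div_nat_rpow.2 (by linarith)
  refine ((EulerProduct.eulerProduct_completely_multiplicative hsum.norm).inv₀
    (tsum_one_div_rpow_one_add_pos hs).ne').congr fun N ↦ ?_
  rw [prod_inv_distrib, inv_inv]
  exact prod_congr rfl fun p _ ↦ by rw [Real.rpow_neg p.cast_nonneg, ← one_div]; rfl

lemma tendsto_prod_one_sub_rpow_cpow (hs : 0 < s) (κ : ℂ) :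
    Tendsto (fun N : ℕ ↦ ∏ p ∈ N.primesBelow, ((1 - (p : ℝ) ^ (-(1 + s)) : ℝ) : ℂ) ^ κ) atTop
      (𝓝 (((∑' n : ℕ, 1 / (n : ℝ) ^ (1 + s))⁻¹ : ℝ) ^ κ)) := by
  refine (((Complex.continuous_ofReal.tendsto _).comp (tendsto_prod_one_sub_rpow hs)).cpow
    tendsto_const_nhds (Complex.ofReal_mem_slitPlane.2
      (inv_pos.2 (tsum_one_div_rpow_one_add_pos hs)))).congr fun N ↦ ?_
  refine (prod_ofReal_cpow _ (fun p hp ↦ sub_nonneg.2 ?_) κ).symm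
  exact Real.rpow_le_one_of_one_le_of_nonpos
    (by exact_mod_cast (Nat.prime_of_mem_primesBelow hp).one_lt.le) (by linarith)

lemma tendsto_mul_tsum_one_div_rpow_one_add :
    Tendsto (fun s : ℝ ↦ s * ∑' n : ℕ, 1 / (n : ℝ) ^ (1 + s)) (𝓝[>] 0) (𝓝 1) := by
  have hshift : Tendsto (fun s : ℝ ↦ 1 + s) (𝓝[>] 0) (𝓝[>] 1) := by
    refine tendsto_nhdsWithin_iff.2 ⟨?_, ?_⟩
    · exact ((continuous_const_add (1 : ℝ)).tendsto' 0 1 (add_zero 1)).mono_left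
        nhdsWithin_le_nhds
    · filter_upwards [self_mem_nhdsWithin] with s hs
      exact lt_add_of_pos_right 1 (Set.mem_Ioi.1 hs)
  simpa only [Function.comp_def, add_sub_cancel_left] using
    tendsto_sub_mul_tsum_nat_rpow.comp hshift

lemma LSeriesSummable_of_summatory_norm_le (hs : 0 < s)
    (hA : ∀ x : ℝ, 2 ≤ x → summatory (‖f ·‖) x ≤ A * Real.log x ^ β) : LSeriesSummable f s := by
  refine LSeriesSummable_of_sum_norm_bigO (r := s / 2) ?_ (by positivity)
    (by rw [Complex.ofReal_re]; linarith)
  have hlog : (fun n : ℕ ↦ Real.log n ^ β) =O[atTop] fun n : ℕ ↦ (n : ℝ) ^ (s / 2) :=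
    ((isLittleO_log_rpow_rpow_atTop β (half_pos hs)).comp_tendsto
      tendsto_natCast_atTop_atTop).isBigO
  refine Asymptotics.IsBigO.trans (.of_bound |A| ?_) hlog
  filter_upwards [eventually_ge_atTop 2] with n hn
  have hsum := hA n (by exact_mod_cast hn)
  rw [summatory, Nat.floor_natCast] at hsum
  rw [Real.norm_of_nonneg (sum_nonneg fun _ _ ↦ norm_nonneg _), Real.norm_eq_abs, ← abs_mul]
  exact hsum.trans (le_abs_self _)

lemma LSeriesSummable_primeDiff (hs : 0 < s) (hf : LSeriesSummable f s) (κ : ℂ) :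
    LSeriesSummable (primeDiff f κ) s := by
  have hzeta : Summable fun n : ℕ ↦ ‖κ‖ * (1 / (n : ℝ) ^ (1 + s)) :=
    (Real.summable_one_div_nat_rpow.2 (by linarith)).mul_left _
  refine .of_norm_bounded (hf.norm.add hzeta) fun n ↦ ?_
  by_cases hn : n.Prime
  · rw [term_primeDiff_of_prime hn]
    refine norm_sub_le_of_le le_rfl ?_
    rw [norm_mul, Complex.norm_of_nonneg (by positivity), Real.rpow_neg n.cast_nonneg, one_div]
  · simp only [LSeries.term, primeDiff, hn, if_false, zero_div, ite_self, norm_zero]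
    positivity

lemma summatory_primeDiff (f : ℕ → ℂ) (κ : ℂ) (x : ℝ) :
    summatory (primeDiff f κ) x = ∑ n ∈ range (⌊x⌋₊ + 1), primeDiff f κ n := by
  rw [summatory, Nat.range_succ_eq_Icc_zero]
  refine sum_subset (Icc_subset_Icc_left zero_le_one) fun n hn hn' ↦ ?_
  obtain rfl : n = 0 := by
    simp only [mem_Icc] at hn hn'
    omega
  simp [primeDiff, Nat.not_prime_zero]

lemma tendsto_LSeries_primeDiff (hf : ∀ s : ℝ, 0 < s → LSeriesSummable f s)
    (hS : Tendsto (fun N ↦ ∑ n ∈ range N, primeDiff f κ n) atTop (𝓝 S)) :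
    Tendsto (fun s : ℝ ↦ LSeries (primeDiff f κ) s) (𝓝[>] 0) (𝓝 S) := by
  have hsummatory : Tendsto (fun x : ℝ ↦ summatory (primeDiff f κ) x) atTop (𝓝 S) := by
    simpa only [summatory_primeDiff, Function.comp_def] using
      hS.comp ((tendsto_add_atTop_nat 1).comp tendsto_nat_floor_atTop)
  simpa using tendsto_cpow_mul_LSeries (κ := 0) (c := S) (by simp)
    (fun s hs ↦ LSeriesSummable_primeDiff hs (hf s hs) κ) (by simpa using hsummatory)

lemma IsMult.cpow_mul_LSeries_eq (hf : IsMult f)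
    (hw : Summable fun x : ℕ × ℕ ↦ primePowerWeight f x.1 x.2) (hs : 0 < s)
    (hsummable : LSeriesSummable f s) (κ : ℂ) :
    (s : ℂ) ^ κ * LSeries f s =
      ((s * ∑' n : ℕ, 1 / (n : ℝ) ^ (1 + s) : ℝ) : ℂ) ^ κ *
        ((∏' p, (1 + eulerCorrection f κ s p)) *
          Complex.exp (LSeries (primeDiff f κ) s)) := by
  set Z := ∑' n : ℕ, 1 / (n : ℝ) ^ (1 + s) with hZ
  have hZ0 : 0 < Z := tsum_one_div_rpow_one_add_pos hs
  have heuler := EulerProduct.eulerProduct (hf.term s).1 (fun {m n} ↦ (hf.term s).2 m n)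
    hsummable.norm (LSeries.term_zero f s)
  have hfactor := hf.tendsto_prod_relativeEulerFactor hw hs.le
    (LSeriesSummable_primeDiff hs hsummable κ).hasSum.tendsto_sum_nat
  have hunique := tendsto_nhds_unique hfactor <|
    ((tendsto_prod_one_sub_rpow_cpow hs κ).mul heuler).congr fun N ↦ prod_mul_distrib.symm
  rw [← hZ] at hunique
  rw [LSeries, LSeries, hunique, Complex.ofReal_mul,
    Complex.mul_cpow_ofReal_nonneg hs.le hZ0.le, mul_assoc, ← mul_assoc ((Z : ℂ) ^ κ),
    ← Complex.mul_cpow_ofReal_nonneg hZ0.le (inv_pos.2 hZ0).le, ← Complex.ofReal_mul,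
    mul_inv_cancel₀ hZ0.ne', Complex.ofReal_one, Complex.one_cpow, one_mul]

lemma IsMult.tendsto_cpow_mul_LSeries_tprod (hf : IsMult f)
    (hw : Summable fun x : ℕ × ℕ ↦ primePowerWeight f x.1 x.2)
    (hsummable : ∀ s : ℝ, 0 < s → LSeriesSummable f s)
    (hS : Tendsto (fun N ↦ ∑ n ∈ range N, primeDiff f κ n) atTop (𝓝 S)) :
    Tendsto (fun s : ℝ ↦ (s : ℂ) ^ κ * LSeries f s) (𝓝[>] 0)
      (𝓝 ((∏' p, (1 + eulerCorrection f κ 0 p)) * Complex.exp S)) := by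
  have hzeta := ((Complex.continuous_ofReal.tendsto _).comp
    tendsto_mul_tsum_one_div_rpow_one_add).cpow (tendsto_const_nhds (x := κ)) (by simp)
  have hlim := hzeta.mul ((hf.tendsto_tprod_eulerCorrection hw κ).mul
    (tendsto_LSeries_primeDiff hsummable hS).cexp)
  rw [Complex.ofReal_one, Complex.one_cpow, one_mul] at hlim
  refine hlim.congr' ?_
  filter_upwards [self_mem_nhdsWithin] with s hs
  exact (hf.cpow_mul_LSeries_eq hw hs (hsummable s hs) κ).symm

lemma term_zero_of_ne_zero {n : ℕ} (hn : n ≠ 0) (f : ℕ → ℂ) :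
    LSeries.term f (0 : ℝ) n = f n := by
  rw [LSeries.term_of_ne_zero hn, Complex.ofReal_zero, Complex.cpow_zero, div_one]

lemma relativeEulerFactor_zero (hp : p.Prime) (f : ℕ → ℂ) (κ : ℂ) :
    relativeEulerFactor f κ 0 p = (1 - 1 / (p : ℂ)) ^ κ * ∑' r, f (p ^ r) := by
  simp only [relativeEulerFactor, term_zero_of_ne_zero (pow_ne_zero _ hp.ne_zero), add_zero,
    Real.rpow_neg_one]
  push_cast
  rw [one_div]

lemma sum_range_term_primeDiff_zero (f : ℕ → ℂ) (κ : ℂ) (N : ℕ) :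
    ∑ n ∈ range N, LSeries.term (primeDiff f κ) (0 : ℝ) n = ∑ n ∈ range N, primeDiff f κ n :=
  sum_congr rfl fun n _ ↦ by
    obtain rfl | hn := eq_or_ne n 0
    · simp [primeDiff, Nat.not_prime_zero]
    · exact term_zero_of_ne_zero hn _

end EulerProduct

section MeanValue

open Topology

variable {f : ℕ → ℂ} {κ c : ℂ} {A β D E : ℝ}

lemma tendsto_summatory_div_log_cpow (hβ : β < κ.re + 1)
    (hE : ∀ x : ℝ, 2 ≤ x → ‖summatory f x - c * (Real.log x : ℂ) ^ κ‖ ≤ E * Real.log x ^ (β - 1)) :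
    Tendsto (fun x : ℝ ↦ summatory f x / (Real.log x : ℂ) ^ κ) atTop (𝓝 c) := by
  have hzero : Tendsto (fun x : ℝ ↦ E * Real.log x ^ (-(κ.re + 1 - β))) atTop (𝓝 0) := by
    simpa using ((tendsto_rpow_neg_atTop (sub_pos.2 hβ)).comp
      Real.tendsto_log_atTop).const_mul E
  refine tendsto_iff_norm_sub_tendsto_zero.2 <|
    squeeze_zero' (Eventually.of_forall fun _ ↦ norm_nonneg _) ?_ hzero
  filter_upwards [eventually_ge_atTop 2] with x hx
  have hlog : 0 < Real.log x := Real.log_pos (by linarith)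
  have hne : (Real.log x : ℂ) ^ κ ≠ 0 := by simp [Complex.cpow_eq_zero_iff, hlog.ne']
  rw [div_sub' hne, norm_div, Complex.norm_cpow_eq_rpow_re_of_pos hlog,
    div_le_iff₀ (by positivity), mul_assoc, ← Real.rpow_add hlog, mul_comm _ c]
  refine (hE x hx).trans_eq ?_
  congr 2
  ring

theorem IsMult.exists_tendsto_prod_and_norm_summatory_sub_le (hf : IsMult f)
    (hw : Summable fun x : ℕ × ℕ ↦ primePowerWeight f x.1 x.2)
    (hD : ∀ y : ℝ, 1 ≤ y → ‖primeLogSum f y - κ * Real.log y‖ ≤ D)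
    (hA : ∀ x : ℝ, 2 ≤ x → summatory (‖f ·‖) x ≤ A * Real.log x ^ β)
    (hκ : -1 < κ.re) (hβ : β < κ.re + 1) :
    ∃ P : ℂ, Tendsto (fun N : ℕ ↦ ∏ p ∈ N.primesBelow, (1 - 1 / (p : ℂ)) ^ κ * ∑' r, f (p ^ r))
        atTop (𝓝 P) ∧
      ∀ x : ℝ, 2 ≤ x → ‖summatory f x - (Complex.Gamma (κ + 1))⁻¹ * P * (Real.log x : ℂ) ^ κ‖ ≤
        (∑' p, primeWeight f p + D) * A * (1 + ‖κ + 1‖ / (κ.re + 1 - β)) *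
          Real.log x ^ (β - 1) := by
  obtain ⟨c, hc⟩ := hf.exists_norm_summatory_sub_le hw hD hA hβ
  obtain ⟨S, hS⟩ := exists_tendsto_sum_primeDiff hD
  have hsummable : ∀ s : ℝ, 0 < s → LSeriesSummable f s := fun s hs ↦
    LSeriesSummable_of_summatory_norm_le hs hA
  have habel := tendsto_cpow_mul_LSeries hκ hsummable
    (tendsto_summatory_div_log_cpow hβ hc)
  have hP := tendsto_nhds_unique habel (hf.tendsto_cpow_mul_LSeries_tprod hw hsummable hS)
  have hΓ : Complex.Gamma (κ + 1) ≠ 0 :=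
    Complex.Gamma_ne_zero_of_re_pos (by rw [Complex.add_re, Complex.one_re]; linarith)
  refine ⟨c * Complex.Gamma (κ + 1), ?_, ?_⟩
  · rw [hP]
    refine (hf.tendsto_prod_relativeEulerFactor hw le_rfl
      (by simpa only [sum_range_term_primeDiff_zero] using hS)).congr fun N ↦ ?_
    exact prod_congr rfl fun p hp ↦
      relativeEulerFactor_zero (Nat.prime_of_mem_primesBelow hp) f κ
  · rwa [mul_comm c, inv_mul_cancel_left₀ hΓ]

end MeanValue

/-! ### Conditions (A), (B) and (C) and the restriction to integers coprime to `q` -/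

/-- The summand `g n / n` of `M_g(x, q)`. -/
noncomputable def harmonicWeight (g : ℕ → ℂ) (n : ℕ) : ℂ := g n / n

/-- The restriction of `f` to the integers coprime to `q`. -/
def coprimePart (f : ℕ → ℂ) (q n : ℕ) : ℂ := if n.Coprime q then f n else 0

section Conditions

variable {f g : ℕ → ℂ} {κ : ℂ} {β : ℝ} {p q : ℕ}

lemma isMult_harmonicWeight (hg : IsMult g) : IsMult (harmonicWeight g) := by
  refine ⟨by simp [harmonicWeight, hg.1], fun m n hmn ↦ ?_⟩
  simp only [harmonicWeight, hg.2 m n hmn, Nat.cast_mul, mul_div_mul_comm]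

lemma isMult_coprimePart (hf : IsMult f) (q : ℕ) : IsMult (coprimePart f q) := by
  refine ⟨by simp [coprimePart, hf.1], fun m n hmn ↦ ?_⟩
  simp only [coprimePart, Nat.coprime_mul_iff_left, hf.2 m n hmn, ite_and, mul_ite,
    ite_mul, zero_mul, mul_zero]
  split_ifs <;> rfl

lemma norm_coprimePart_le (f : ℕ → ℂ) (q n : ℕ) : ‖coprimePart f q n‖ ≤ ‖f n‖ := by
  rw [coprimePart]
  split_ifs
  · rfl
  · simp

lemma summatory_coprimePart_harmonicWeight (g : ℕ → ℂ) (x : ℝ) (q : ℤ) :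
    summatory (coprimePart (harmonicWeight g) q.natAbs) x = Mgq g x q :=
  (sum_filter _ _).symm

lemma one_le_deltaq (g : ℕ → ℂ) (q : ℤ) : 1 ≤ deltaq g q :=
  le_add_of_nonneg_right (sum_nonneg fun _ _ ↦ by positivity)

lemma CondA.exists_norm_primeLogSum_sub_le (hA : CondA g κ) : ∃ C : ℝ, ∀ y : ℝ, 1 ≤ y →
    ‖primeLogSum (harmonicWeight g) y - κ * Real.log y‖ ≤ C := by
  obtain ⟨C, hC⟩ := hA
  refine ⟨max C (‖κ‖ * Real.log 2), fun y hy ↦ ?_⟩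
  obtain hy2 | hy2 := le_or_gt 2 y
  · refine le_max_of_le_left ((hC y hy2).trans' (le_of_eq ?_))
    simp only [primeLogSum, harmonicWeight, div_mul_eq_mul_div]
  · have hfloor : ⌊y⌋₊ = 1 := (Nat.floor_eq_iff (by linarith)).2 (by norm_num; exact ⟨hy, hy2⟩)
    have hempty : primesLE y = ∅ := by
      rw [primesLE, hfloor]
      decide
    rw [primeLogSum, hempty, sum_empty, zero_sub, norm_neg, norm_mul,
      Complex.norm_of_nonneg (Real.log_nonneg hy)]
    refine le_max_of_le_right ?_
    gcongr

lemma norm_primeLogSum_sub_primeLogSum_coprimePart_le (f : ℕ → ℂ) (hq : q ≠ 0) (x : ℝ) :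
    ‖primeLogSum f x - primeLogSum (coprimePart f q) x‖ ≤
      ∑ p ∈ q.primeFactors, ‖f p‖ * Real.log p := by
  have hsub : primeLogSum f x - primeLogSum (coprimePart f q) x =
      ∑ p ∈ primesLE x with p ∣ q, f p * Real.log p := by
    rw [primeLogSum, primeLogSum, ← sum_sub_distrib, sum_filter]
    refine sum_congr rfl fun p hp ↦ ?_
    simp only [coprimePart, (mem_filter.1 hp).2.coprime_iff_not_dvd]
    split_ifs <;> simp
  rw [hsub]
  calc ‖∑ p ∈ primesLE x with p ∣ q, f p * Real.log p‖
      ≤ ∑ p ∈ primesLE x with p ∣ q, ‖f p‖ * Real.log p := norm_sum_le_of_le _ fun p _ ↦ by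
        rw [norm_mul, Complex.norm_of_nonneg (Real.log_natCast_nonneg p)]
    _ ≤ ∑ p ∈ q.primeFactors, ‖f p‖ * Real.log p := by
        refine sum_le_sum_of_subset_of_nonneg (fun p hp ↦ ?_) fun _ _ _ ↦ by positivity
        obtain ⟨hpx, hpq⟩ := mem_filter.1 hp
        exact Nat.mem_primeFactors.2 ⟨(mem_filter.1 hpx).2, hpq, hq⟩

lemma CondA.exists_norm_primeLogSum_coprimePart_sub_le (hA : CondA g κ) :
    ∃ C : ℝ, ∀ q : ℤ, q ≠ 0 → ∀ y : ℝ, 1 ≤ y →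
      ‖primeLogSum (coprimePart (harmonicWeight g) q.natAbs) y - κ * Real.log y‖ ≤
        C * deltaq g q := by
  obtain ⟨C, hC⟩ := hA.exists_norm_primeLogSum_sub_le
  refine ⟨max C 1, fun q hq y hy ↦ ?_⟩
  have hδ := one_le_deltaq g q
  have hremoved := norm_primeLogSum_sub_primeLogSum_coprimePart_le (harmonicWeight g)
    (Int.natAbs_ne_zero.2 hq) y
  have hδ_eq : ∑ p ∈ q.natAbs.primeFactors, ‖harmonicWeight g p‖ * Real.log p =
      deltaq g q - 1 := by
    simp only [deltaq, harmonicWeight, norm_div, Complex.norm_natCast, div_mul_eq_mul_div,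
      add_sub_cancel_left]
  calc ‖primeLogSum (coprimePart (harmonicWeight g) q.natAbs) y - κ * Real.log y‖
      ≤ C + (deltaq g q - 1) := by
        rw [← sub_sub_sub_cancel_left _ _ (primeLogSum (harmonicWeight g) y), ← hδ_eq]
        exact norm_sub_le_of_le (hC y hy) hremoved
    _ ≤ max C 1 * deltaq g q := by nlinarith [le_max_left C 1, le_max_right C 1]

lemma ofReal_norm_div_natCast (a : ℂ) {n : ℕ} (hn : n ≠ 0) :
    ENNReal.ofReal ‖a / n‖ = (‖a‖₊ : ℝ≥0∞) / n := by
  rw [norm_div, Complex.norm_natCast, ENNReal.ofReal_div_of_pos (by positivity), ofReal_norm,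
    ENNReal.ofReal_natCast]
  rfl

lemma summable_prod_of_tsum_ofReal_ne_top {α γ : Type*} {F : α × γ → ℝ} (hF : ∀ x, 0 ≤ F x)
    (h : ∑' a, ∑' b, ENNReal.ofReal (F (a, b)) ≠ ⊤) : Summable F := by
  rw [← ENNReal.tsum_prod (f := fun a b ↦ ENNReal.ofReal (F (a, b)))] at h
  exact (ENNReal.summable_toReal h).congr fun x ↦ ENNReal.toReal_ofReal (hF x)

lemma CondB.summable_norm_prime_mul (hB : CondB g) :
    Summable fun x : Nat.Primes × ℕ ↦ ‖harmonicWeight g x.1‖ *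
      ‖harmonicWeight g (x.1 ^ (x.2 + 1))‖ * Real.log (x.1 : ℕ) := by
  refine summable_prod_of_tsum_ofReal_ne_top (fun _ ↦ by positivity) ?_
  refine ((ENNReal.add_lt_top.1 hB).1.trans_le' (le_of_eq ?_)).ne
  refine tsum_congr fun p ↦ ?_
  rw [← ENNReal.tsum_mul_left]
  refine tsum_congr fun r ↦ ?_
  rw [ENNReal.ofReal_mul (by positivity), ENNReal.ofReal_mul (by positivity), harmonicWeight,
    harmonicWeight, ofReal_norm_div_natCast _ p.2.ne_zero,
    ofReal_norm_div_natCast _ (pow_ne_zero _ p.2.ne_zero), mul_right_comm,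
    ENNReal.mul_div_right_comm]

lemma CondB.summable_norm_prime_pow_add_two (hB : CondB g) :
    Summable fun x : Nat.Primes × ℕ ↦ (x.2 + 2) * ‖harmonicWeight g (x.1 ^ (x.2 + 2))‖ *
      Real.log (x.1 : ℕ) := by
  refine summable_prod_of_tsum_ofReal_ne_top (fun _ ↦ by positivity) ?_
  refine ((ENNReal.add_lt_top.1 hB).2.trans_le' (le_of_eq ?_)).ne
  refine tsum_congr fun p ↦ tsum_congr fun r ↦ ?_
  have hlog : Real.log ((p : ℕ) ^ (r + 2) : ℕ) = (r + 2) * Real.log (p : ℕ) := by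
    rw [Nat.cast_pow, Real.log_pow]
    push_cast
    rfl
  rw [hlog, mul_right_comm, mul_comm, ENNReal.ofReal_mul (norm_nonneg _), harmonicWeight,
    ofReal_norm_div_natCast _ (pow_ne_zero _ p.2.ne_zero), ENNReal.mul_div_right_comm]

lemma CondB.summable_primePowerWeight (hB : CondB g) :
    Summable fun x : ℕ × ℕ ↦ primePowerWeight (harmonicWeight g) x.1 x.2 := by
  have hinj : Function.Injective (Prod.map (↑) id : Nat.Primes × ℕ → ℕ × ℕ) :=
    Subtype.val_injective.prodMap Function.injective_id
  refine (hinj.summable_iff fun x hx ↦ if_neg fun hp ↦ hx ⟨(⟨x.1, hp⟩, x.2), rfl⟩).1 ?_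
  refine (hB.summable_norm_prime_mul.add hB.summable_norm_prime_pow_add_two).congr fun x ↦ ?_
  rw [← add_mul]
  exact (primePowerWeight_of_prime x.1.2 x.2).symm

lemma IsMult.summatory_norm_le_prod_tsum (hf : IsMult f)
    (hw : Summable fun x : ℕ × ℕ ↦ primePowerWeight f x.1 x.2) (x : ℝ) :
    summatory (‖f ·‖) x ≤ ∏ p ∈ primesLE x, ∑' r, ‖f (p ^ r)‖ := by
  have hsmooth : ∀ n ∈ Icc 1 ⌊x⌋₊, n ∈ (⌊x⌋₊ + 1).smoothNumbers := fun n hn ↦ by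
    obtain ⟨hn1, hnx⟩ := mem_Icc.1 hn
    exact Nat.mem_smoothNumbers_of_lt hn1 (Nat.lt_succ_of_le hnx)
  have hsum := (EulerProduct.summable_and_hasSum_smoothNumbers_prod_primesBelow_tsum
    (f := fun n ↦ ‖f n‖) (by simp [hf.1]) (fun {m n} h ↦ by rw [hf.2 m n h, norm_mul])
    (fun hp ↦ by simpa using summable_norm_prime_pow hw hp) (⌊x⌋₊ + 1)).2
  rw [summatory, ← sum_subtype_of_mem (fun n ↦ ‖f n‖) hsmooth]
  exact sum_le_hasSum _ (fun _ _ ↦ norm_nonneg _) hsum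

lemma IsMult.tsum_norm_prime_pow_le (hf : IsMult f)
    (hw : Summable fun x : ℕ × ℕ ↦ primePowerWeight f x.1 x.2) (hp : p.Prime) :
    ∑' r, ‖f (p ^ r)‖ ≤ (1 + ‖f p‖) * Real.exp (primeWeight f p) := by
  rw [← (summable_norm_prime_pow hw hp).sum_add_tsum_nat_add 2]
  simp only [sum_range_succ, range_zero, sum_empty, zero_add, pow_zero, hf.1, norm_one, pow_one]
  nlinarith [tsum_norm_prime_pow_add_two_le hw hp, Real.add_one_le_exp (primeWeight f p),
    primeWeight_nonneg f p, norm_nonneg (f p)]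

lemma IsMult.summatory_norm_le (hf : IsMult f)
    (hw : Summable fun x : ℕ × ℕ ↦ primePowerWeight f x.1 x.2) (x : ℝ) :
    summatory (‖f ·‖) x ≤
      (∏ p ∈ primesLE x, (1 + ‖f p‖)) * Real.exp (∑' p, primeWeight f p) :=
  calc summatory (‖f ·‖) x
      ≤ ∏ p ∈ primesLE x, (1 + ‖f p‖) * Real.exp (primeWeight f p) :=
        (hf.summatory_norm_le_prod_tsum hw x).trans <|
          prod_le_prod (fun _ _ ↦ tsum_nonneg fun _ ↦ norm_nonneg _) fun _ hp ↦
            hf.tsum_norm_prime_pow_le hw (mem_filter.1 hp).2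
    _ = (∏ p ∈ primesLE x, (1 + ‖f p‖)) * Real.exp (∑ p ∈ primesLE x, primeWeight f p) := by
        rw [prod_mul_distrib, Real.exp_sum]
    _ ≤ _ := by
        gcongr
        exact (summable_primeWeight hw).sum_le_tsum _ fun p _ ↦ primeWeight_nonneg f p

lemma CondC.exists_summatory_norm_harmonicWeight_le (hC : CondC g β) (hg : IsMult g)
    (hB : CondB g) : ∃ A : ℝ, 0 ≤ A ∧
      ∀ x : ℝ, 2 ≤ x → summatory (‖harmonicWeight g ·‖) x ≤ A * Real.log x ^ β := by
  obtain ⟨C, hC⟩ := hC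
  have hlog {x : ℝ} (hx : 2 ≤ x) : 0 < Real.log x := Real.log_pos (by linarith)
  have hC0 : 0 ≤ C := nonneg_of_mul_nonneg_left
    ((prod_nonneg fun p _ ↦ by positivity).trans (hC 2 le_rfl))
    (Real.rpow_pos_of_pos (hlog le_rfl) β)
  refine ⟨C * Real.exp (∑' p, primeWeight (harmonicWeight g) p), by positivity, fun x hx ↦ ?_⟩
  rw [mul_right_comm]
  refine ((isMult_harmonicWeight hg).summatory_norm_le hB.summable_primePowerWeight x).trans ?_
  gcongr
  simpa only [harmonicWeight, norm_div, Complex.norm_natCast] using hC x hx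

lemma prod_primeFactors_one_sub_inv_cpow (hq : q ≠ 0) (κ : ℂ) :
    ∏ p ∈ q.primeFactors, (1 - 1 / (p : ℂ)) ^ κ = ((q.totient : ℂ) / q) ^ κ := by
  have htotient : ((∏ p ∈ q.primeFactors, (1 - 1 / (p : ℝ)) : ℝ) : ℂ) = q.totient / q := by
    have h := congrArg (Rat.cast : ℚ → ℂ) q.totient_eq_mul_prod_factors
    push_cast at h
    rw [h, mul_div_cancel_left₀ _ (by exact_mod_cast hq)]
    push_cast
    simp only [one_div]
  rw [← htotient, ← prod_ofReal_cpow]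
  · push_cast
    rfl
  · intro p hp
    exact sub_nonneg.2 <| div_le_one_of_le₀
      (by exact_mod_cast (Nat.prime_of_mem_primeFactors hp).one_lt.le) p.cast_nonneg

lemma tsum_coprimePart_prime_pow_of_not_dvd (f : ℕ → ℂ) (hp : p.Prime) (hpq : ¬ p ∣ q) :
    ∑' r, coprimePart f q (p ^ r) = ∑' r, f (p ^ r) :=
  tsum_congr fun r ↦ if_pos ((hp.coprime_iff_not_dvd.2 hpq).pow_left r)

lemma IsMult.tsum_coprimePart_prime_pow_of_dvd (hf : IsMult f) (hp : p.Prime) (hpq : p ∣ q) :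
    ∑' r, coprimePart f q (p ^ r) = 1 := by
  rw [tsum_eq_single 0, pow_zero, (isMult_coprimePart hf q).1]
  intro r hr
  rw [coprimePart, if_neg]
  rwa [Nat.coprime_pow_left_iff (Nat.pos_of_ne_zero hr), hp.coprime_iff_not_dvd, not_not]

lemma filter_dvd_primesBelow (hq : q ≠ 0) {N : ℕ} (hN : q < N) :
    {p ∈ N.primesBelow | p ∣ q} = q.primeFactors := by
  ext p
  simp only [mem_filter, Nat.mem_primesBelow, Nat.mem_primeFactors]
  exact ⟨fun h ↦ ⟨h.1.2, h.2, hq⟩, fun h ↦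
    ⟨⟨(Nat.le_of_dvd (Nat.pos_of_ne_zero hq) h.2.1).trans_lt hN, h.1⟩, h.2.1⟩⟩

lemma IsMult.prod_eulerFactor_coprimePart (hg : IsMult g) (κ : ℂ) {q : ℤ} (hq : q ≠ 0) {N : ℕ}
    (hN : q.natAbs < N) :
    ∏ p ∈ N.primesBelow,
        (1 - 1 / (p : ℂ)) ^ κ * ∑' r, coprimePart (harmonicWeight g) q.natAbs (p ^ r) =
      ((q.natAbs.totient : ℂ) / q.natAbs) ^ κ *
        ∏ p ∈ range N with Nat.Prime p ∧ ¬ (p : ℤ) ∣ q, eulerFactor g κ p := by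
  have hq' := Int.natAbs_ne_zero.2 hq
  rw [← prod_filter_mul_prod_filter_not _ (· ∣ q.natAbs), filter_dvd_primesBelow hq' hN,
    ← prod_primeFactors_one_sub_inv_cpow hq', Nat.primesBelow, filter_filter]
  simp only [Int.natCast_dvd]
  congr 1
  · refine prod_congr rfl fun p hp ↦ ?_
    rw [(isMult_harmonicWeight hg).tsum_coprimePart_prime_pow_of_dvd
      (Nat.prime_of_mem_primeFactors hp) (Nat.dvd_of_mem_primeFactors hp), mul_one]
  · refine prod_congr rfl fun p hp ↦ ?_
    obtain ⟨-, hp, hpq⟩ := mem_filter.1 hp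
    rw [tsum_coprimePart_prime_pow_of_not_dvd _ hp hpq, eulerFactor]
    simp only [harmonicWeight, Nat.cast_pow]

lemma totient_div_self_cpow_ne_zero (hq : q ≠ 0) (κ : ℂ) : ((q.totient : ℂ) / q) ^ κ ≠ 0 := by
  simp [Complex.cpow_eq_zero_iff, hq]

theorem IsMult.exists_forall_norm_Mgq_sub_le (hg : IsMult g) (hA : CondA g κ) (hB : CondB g)
    (hC : CondC g β) (hκ : -1 < κ.re) (hβ : β < κ.re + 1) :
    ∃ C : ℝ, ∀ q : ℤ, q ≠ 0 → ∃ P : ℂ,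
      Tendsto (fun N : ℕ ↦ ∏ p ∈ N.primesBelow,
        (1 - 1 / (p : ℂ)) ^ κ * ∑' r, coprimePart (harmonicWeight g) q.natAbs (p ^ r))
        atTop (nhds P) ∧
      ∀ x : ℝ, 2 ≤ x → ‖Mgq g x q - (Complex.Gamma (κ + 1))⁻¹ * P * (Real.log x : ℂ) ^ κ‖ ≤
        C * deltaq g q * Real.log x ^ (β - 1) := by
  obtain ⟨D, hD⟩ := hA.exists_norm_primeLogSum_coprimePart_sub_le
  obtain ⟨A, hA0, hA⟩ := hC.exists_summatory_norm_harmonicWeight_le hg hB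
  have hw := hB.summable_primePowerWeight
  set W := ∑' p, primeWeight (harmonicWeight g) p
  have hE : 0 ≤ 1 + ‖κ + 1‖ / (κ.re + 1 - β) := by
    have := sub_pos.2 hβ
    positivity
  set E := 1 + ‖κ + 1‖ / (κ.re + 1 - β)
  refine ⟨(W + D) * A * E, fun q hq ↦ ?_⟩
  have hle := norm_coprimePart_le (harmonicWeight g) q.natAbs
  have hmult := isMult_coprimePart (isMult_harmonicWeight hg) q.natAbs
  obtain ⟨P, hP, hsum⟩ := hmult.exists_tendsto_prod_and_norm_summatory_sub_le
    (summable_primePowerWeight_of_norm_le hle hw) (hD q hq)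
    (fun x hx ↦ (sum_le_sum fun n _ ↦ hle n).trans (hA x hx)) hκ hβ
  have hW : ∑' p, primeWeight (coprimePart (harmonicWeight g) q.natAbs) p ≤ W * deltaq g q :=
    (tsum_primeWeight_le_of_norm_le hle hw).trans <|
      le_mul_of_one_le_right (tsum_nonneg (primeWeight_nonneg _)) (one_le_deltaq g q)
  refine ⟨P, hP, fun x hx ↦ ?_⟩
  have hlog : 0 ≤ Real.log x := Real.log_nonneg (by linarith)
  rw [← summatory_coprimePart_harmonicWeight]
  calc _ ≤ _ := hsum x hx
    _ ≤ (W * deltaq g q + D * deltaq g q) * A * E * Real.log x ^ (β - 1) := by gcongr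
    _ = (W + D) * A * E * deltaq g q * Real.log x ^ (β - 1) := by ring

end Conditions

theorem stmt1 (g : ℕ → ℂ) (κ : ℂ) (β : ℝ) (hg : IsMult g)
    (hκ : κ.im ^ 2 < 2 * κ.re + 1)
    (hA : CondA g κ) (hB : CondB g)
    (hβ0 : 0 ≤ β) (hβ : β < κ.re + 1) (hC : CondC g β) :
    ∃ C : ℝ, ∀ q : ℤ, q ≠ 0 →
      ∃ P : ℂ,
        Tendsto
          (fun N : ℕ =>
            ∏ p ∈ (Finset.range N).filter (fun p => Nat.Prime p ∧ ¬ (p : ℤ) ∣ q),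
              eulerFactor g κ p)
          atTop (nhds P) ∧
        ∀ x : ℝ, 2 ≤ x →
          ‖Mgq g x q -
              (Complex.Gamma (κ + 1))⁻¹ *
                ((q.natAbs.totient : ℂ) / (q.natAbs : ℂ)) ^ κ * P *
                ((Real.log x : ℂ) ^ κ)‖ ≤
            C * deltaq g q * Real.log x ^ (β - 1) := by
  obtain ⟨C, hMgq⟩ := hg.exists_forall_norm_Mgq_sub_le hA hB hC (by linarith) hβ
  refine ⟨C, fun q hq ↦ ?_⟩
  obtain ⟨P, hP, hsum⟩ := hMgq q hq
  have hφ := totient_div_self_cpow_ne_zero (Int.natAbs_ne_zero.2 hq) κ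
  refine ⟨P / ((q.natAbs.totient : ℂ) / q.natAbs) ^ κ, (hP.div_const _).congr' ?_, fun x hx ↦ ?_⟩
  · filter_upwards [eventually_gt_atTop q.natAbs] with N hN
    rw [hg.prod_eulerFactor_coprimePart κ hq hN, mul_div_cancel_left₀ _ hφ]
  · rw [mul_assoc _ _ (P / _), mul_div_cancel₀ _ hφ]
    exact hsum x hx
end

section
/- Suppose g : ℕ → ℂ is multiplicative and satisfies Condition (A) for some κ = ξ + iη with η² < 2ξ + 1, satisfies Condition (B), and satisfies Condition (C) with some β < ξ + 1. Then ∑_{n < x} g(n) ≪_g x·(log x)^{β−1} for all x ≥ 2. -/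
open Filter Finset
open scoped ENNReal NNReal

/-!
Write `G(x) = ∑_{n ≤ x} |g(n)| / n`. Comparing with an Euler product, Conditions (B) and (C) give
`G(x) ≪ (log x) ^ β`, so it suffices to show `log x * |∑_{n < x} g(n)| ≪ x * G(x)`. Since
`log (x / n) ≤ x / n`, the factor `log x` may be replaced by the weight `log n` inside the sum.
Expand `log n = ∑_{p ∣ n} v_p(n) log p` and write `n = p k`. If `p ∤ k` the term of `p` is
`g(p) log p * g(k)`, and the sum of these terms over all `p k < x` is at most
`∑_k |g(k)| |∑_{p < x / k} g(p) log p| ≪ x * G(x)`, by the Chebyshev-type bound that partial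
summation extracts from Condition (A). The discrepancy at the `n` divisible by `p²`, grouped by
`n = p ^ v * m` with `p ∤ m`, is at most `x * G(x)` times the convergent sum in Condition (B).
-/

section PartialSummation

lemma sum_range_log_sub_log_le (N : ℕ) :
    ∑ n ∈ range N, (Real.log N - Real.log n) ≤ 2 * N := by
  have hpow : (N : ℝ) ^ N ≠ 0 := mod_cast Nat.pow_self_pos.ne'
  have hfact : (N.factorial : ℝ) ≠ 0 := mod_cast N.factorial_ne_zero
  calc ∑ n ∈ range N, (Real.log N - Real.log n)
      = ∑ n ∈ range (N + 1), (Real.log N - Real.log n) := by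
        rw [sum_range_succ, sub_self, add_zero]
    _ = ∑ n ∈ range N, (Real.log N - Real.log (n + 1 : ℕ)) + Real.log N := by
        rw [sum_range_succ']; simp
    _ = Real.log ((N : ℝ) ^ N / N.factorial) + Real.log N := by
        rw [Real.log_div hpow hfact, Real.log_pow, ← prod_range_add_one_eq_factorial,
          Nat.cast_prod, Real.log_prod fun n _ => Nat.cast_ne_zero.2 n.succ_ne_zero]
        simp
    _ ≤ N + N := by
        gcongr
        · exact (Real.log_le_iff_le_exp (by positivity)).2
            (Real.pow_div_factorial_le_exp _ N.cast_nonneg N)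
        · exact Real.log_le_self N.cast_nonneg
    _ = 2 * N := (two_mul _).symm

variable {E : Type*}

lemma sum_range_succ_nsmul [AddCommGroup E] (a : ℕ → E) (N : ℕ) :
    ∑ n ∈ range (N + 1), n • a n =
      ∑ n ∈ range N, (∑ k ∈ range (N + 1), a k - ∑ k ∈ range (n + 1), a k) := by
  induction N with
  | zero => simp
  | succ N ih =>
    have hstep (n : ℕ) : ∑ k ∈ range (N + 1 + 1), a k - ∑ k ∈ range (n + 1), a k =
        a (N + 1) + (∑ k ∈ range (N + 1), a k - ∑ k ∈ range (n + 1), a k) := by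
      rw [sum_range_succ _ (N + 1)]; abel
    simp_rw [hstep, sum_add_distrib]
    rw [sum_range_succ, ih, sum_const, card_range, sum_range_succ (fun n =>
      ∑ k ∈ range (N + 1), a k - ∑ k ∈ range (n + 1), a k), sub_self, add_zero, add_comm]

lemma norm_sum_range_nsmul_le [NormedAddCommGroup E] [NormedSpace ℝ E] {a : ℕ → E} {κ : E}
    {C : ℝ} (h : ∀ N : ℕ, ‖∑ n ∈ range (N + 1), a n - Real.log N • κ‖ ≤ C) (N : ℕ) :
    ‖∑ n ∈ range (N + 1), n • a n‖ ≤ 2 * (C + ‖κ‖) * N := by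
  set A : ℕ → E := fun m => ∑ n ∈ range (m + 1), a n
  have hdiff (n : ℕ) (hn : n ∈ range N) :
      ‖A N - A n‖ ≤ 2 * C + (Real.log N - Real.log n) * ‖κ‖ := by
    have hlog : 0 ≤ Real.log N - Real.log n := by
      rcases n.eq_zero_or_pos with rfl | hpos
      · simpa using Real.log_natCast_nonneg N
      · have := (mem_range.1 hn).le
        exact sub_nonneg.2 (by gcongr)
    calc ‖A N - A n‖
        = ‖A N - Real.log N • κ - (A n - Real.log n • κ)
            + (Real.log N - Real.log n) • κ‖ := by congr 1; module
      _ ≤ ‖A N - Real.log N • κ‖ + ‖A n - Real.log n • κ‖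
            + ‖(Real.log N - Real.log n) • κ‖ :=
          (norm_add_le _ _).trans (by gcongr; exact norm_sub_le _ _)
      _ ≤ C + C + (Real.log N - Real.log n) * ‖κ‖ := by
          rw [norm_smul, Real.norm_of_nonneg hlog]
          gcongr
          exacts [h N, h n]
      _ = 2 * C + (Real.log N - Real.log n) * ‖κ‖ := by ring
  calc ‖∑ n ∈ range (N + 1), n • a n‖
      = ‖∑ n ∈ range N, (A N - A n)‖ := by rw [sum_range_succ_nsmul]
    _ ≤ ∑ n ∈ range N, (2 * C + (Real.log N - Real.log n) * ‖κ‖) := norm_sum_le_of_le _ hdiff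
    _ = N * (2 * C) + (∑ n ∈ range N, (Real.log N - Real.log n)) * ‖κ‖ := by
        rw [sum_add_distrib, sum_const, card_range, nsmul_eq_mul, sum_mul]
    _ ≤ N * (2 * C) + 2 * N * ‖κ‖ := by gcongr; exact sum_range_log_sub_log_le N
    _ = 2 * (C + ‖κ‖) * N := by ring

end PartialSummation

section Chebyshev

variable {g : ℕ → ℂ} {x : ℝ} {p : ℕ}

lemma mem_primesLE : p ∈ primesLE x ↔ p ≤ x ∧ p.Prime := by
  rw [primesLE, mem_filter, mem_range, Nat.lt_succ_iff]
  exact and_congr_left fun hp => Nat.le_floor_iff' hp.ne_zero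

lemma prime_of_mem_primesLE (hp : p ∈ primesLE x) : p.Prime :=
  (mem_primesLE.1 hp).2

lemma primesLE_natCast (N : ℕ) : primesLE N = {p ∈ range (N + 1) | p.Prime} := by
  rw [primesLE, Nat.floor_natCast]

/-- The Chebyshev-type bound `∑_{p ≤ x} g(p) log p ≪ x`. It follows from Condition (A) by partial
summation, and is the form in which the values of `g` at primes enter the argument. -/
def ChebyshevBound (g : ℕ → ℂ) : Prop :=
  ∃ K : ℝ, ∀ x : ℝ, 0 ≤ x → ‖∑ p ∈ primesLE x, g p * (Real.log p : ℂ)‖ ≤ K * x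

lemma CondA.chebyshevBound {κ : ℂ} (hA : CondA g κ) : ChebyshevBound g := by
  obtain ⟨C, hC⟩ := hA
  set a : ℕ → ℂ := fun n => if n.Prime then g n * (Real.log n : ℂ) / n else 0
  have hasymp (N : ℕ) : ‖∑ n ∈ range (N + 1), a n - Real.log N • κ‖ ≤ max C 0 := by
    rcases lt_or_ge N 2 with hN | hN
    · interval_cases N <;> simp [a, sum_range_succ, Nat.not_prime_zero, Nat.not_prime_one]
    · refine le_max_of_le_left ((hC N (mod_cast hN)).trans' (le_of_eq ?_))
      rw [← sum_filter, primesLE_natCast, Complex.real_smul, mul_comm κ]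
  have hsum (N : ℕ) :
      ∑ p ∈ primesLE N, g p * (Real.log p : ℂ) = ∑ n ∈ range (N + 1), n • a n := by
    rw [primesLE_natCast, sum_filter]
    refine sum_congr rfl fun n _ => ?_
    by_cases hn : n.Prime
    · have : (n : ℂ) ≠ 0 := mod_cast hn.ne_zero
      simp only [a, hn, if_true, nsmul_eq_mul]
      field_simp
    · simp [a, hn]
  refine ⟨2 * (max C 0 + ‖κ‖), fun x hx => ?_⟩
  calc ‖∑ p ∈ primesLE x, g p * (Real.log p : ℂ)‖
      = ‖∑ p ∈ primesLE ⌊x⌋₊, g p * (Real.log p : ℂ)‖ := by rw [primesLE_natCast, primesLE]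
    _ ≤ 2 * (max C 0 + ‖κ‖) * ⌊x⌋₊ := hsum _ ▸ norm_sum_range_nsmul_le hasymp _
    _ ≤ 2 * (max C 0 + ‖κ‖) * x := by gcongr; exact Nat.floor_le hx

end Chebyshev

section ConditionB

variable {g : ℕ → ℂ} {p : ℕ}

/-- The contribution of the prime power `p ^ (r + 2)` to Condition (B): the term of exponent `r + 1`
of the first series plus the term of exponent `r + 2` of the second one. -/
noncomputable def condBTerm (g : ℕ → ℂ) (p r : ℕ) : ℝ :=
  Real.log p * ((r + 2) * ‖g (p ^ (r + 2))‖ + ‖g p‖ * ‖g (p ^ (r + 1))‖) / (p : ℝ) ^ (r + 2)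

lemma condBTerm_nonneg (g : ℕ → ℂ) (p r : ℕ) : 0 ≤ condBTerm g p r := by
  have := Real.log_natCast_nonneg p
  unfold condBTerm
  positivity

lemma CondB.summable_condBTerm (hB : CondB g) :
    Summable fun q : Nat.Primes × ℕ => condBTerm g q.1 q.2 := by
  obtain ⟨hfirst, hsecond⟩ := ENNReal.add_lt_top.1 hB
  simp_rw [← ENNReal.tsum_mul_left] at hfirst
  rw [← ENNReal.tsum_prod] at hfirst hsecond
  refine ((ENNReal.summable_toReal hfirst.ne).add
    (ENNReal.summable_toReal hsecond.ne)).congr fun q => ?_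
  have hq : ((q.1 : ℕ) : ℝ) ≠ 0 := mod_cast q.1.2.ne_zero
  simp only [condBTerm, ENNReal.toReal_mul, ENNReal.toReal_div, ENNReal.toReal_natCast,
    ENNReal.toReal_ofReal (Real.log_natCast_nonneg _), ENNReal.coe_toReal, coe_nnnorm]
  simp only [Nat.cast_pow, Nat.cast_add, Nat.cast_ofNat, Real.log_pow]
  field_simp
  ring

lemma CondB.summable_condBTerm_of_prime (hB : CondB g) (hp : p.Prime) :
    Summable (condBTerm g p) :=
  hB.summable_condBTerm.prod_factor ⟨p, hp⟩

lemma CondB.sum_primesLE_tsum_condBTerm_le (hB : CondB g) (x : ℝ) :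
    ∑ p ∈ primesLE x, ∑' r, condBTerm g p r ≤
      ∑' q : Nat.Primes × ℕ, condBTerm g q.1 q.2 := by
  rw [hB.summable_condBTerm.tsum_prod,
    ← sum_subtype_of_mem (p := Nat.Prime) (fun p => ∑' r, condBTerm g p r)
      fun _ => prime_of_mem_primesLE]
  exact hB.summable_condBTerm.prod.sum_le_tsum
    (show Finset Nat.Primes from (primesLE x).subtype Nat.Prime)
    fun _ _ => tsum_nonneg fun _ => condBTerm_nonneg _ _ _

end ConditionB

section EulerProduct

lemma sum_Icc_le_prod_primesBelow_tsum {f : ℕ → ℝ} (hf0 : ∀ n, 0 ≤ f n) (hf1 : f 1 = 1)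
    (hmul : ∀ {m n : ℕ}, m.Coprime n → f (m * n) = f m * f n)
    (hsum : ∀ {p : ℕ}, p.Prime → Summable fun r => f (p ^ r)) (N : ℕ) :
    ∑ n ∈ Icc 1 N, f n ≤ ∏ p ∈ (N + 1).primesBelow, ∑' r, f (p ^ r) := by
  classical
  have hsmooth := (EulerProduct.summable_and_hasSum_smoothNumbers_prod_primesBelow_tsum
    hf1 hmul (fun hp => (hsum hp).norm) (N + 1)).2
  have hmem (n : ℕ) (hn : n ∈ Icc 1 N) : n ∈ Nat.smoothNumbers (N + 1) := by
    rw [mem_Icc] at hn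
    exact Nat.mem_smoothNumbers_of_lt hn.1 (Nat.lt_succ_of_le hn.2)
  rw [← hsmooth.tsum_eq, ← sum_subtype_of_mem f hmem]
  exact hsmooth.summable.sum_le_tsum _ fun n _ => hf0 n

variable {g : ℕ → ℂ} {p : ℕ}

lemma norm_div_pow_add_two_le_condBTerm (g : ℕ → ℂ) (hp : p.Prime) (r : ℕ) :
    ‖g (p ^ (r + 2))‖ / ((p ^ (r + 2) : ℕ) : ℝ) ≤ condBTerm g p r := by
  have hlog : 1 ≤ Real.log p * (r + 2) := by
    have hp2 : Real.log 2 ≤ Real.log p := Real.log_le_log two_pos (mod_cast hp.two_le)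
    calc 1 ≤ Real.log 2 * (0 + 2) := by linarith [Real.log_two_gt_d9]
      _ ≤ Real.log p * (r + 2) := by gcongr; exact r.cast_nonneg
  have hcross : 0 ≤ Real.log p * (‖g p‖ * ‖g (p ^ (r + 1))‖) :=
    mul_nonneg (Real.log_natCast_nonneg p) (by positivity)
  rw [condBTerm, Nat.cast_pow]
  gcongr
  linarith [le_mul_of_one_le_left (norm_nonneg (g (p ^ (r + 2)))) hlog]

lemma CondB.summable_norm_div_pow (hB : CondB g) (hp : p.Prime) :
    Summable fun r => ‖g (p ^ r)‖ / ((p ^ r : ℕ) : ℝ) :=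
  (summable_nat_add_iff 2).1 <| (hB.summable_condBTerm_of_prime hp).of_nonneg_of_le
    (fun _ => by positivity) (norm_div_pow_add_two_le_condBTerm g hp)

lemma CondB.tsum_norm_div_pow_le (hB : CondB g) (hg : IsMult g) (hp : p.Prime) :
    ∑' r, ‖g (p ^ r)‖ / ((p ^ r : ℕ) : ℝ) ≤
      (1 + ‖g p‖ / p) * Real.exp (∑' r, condBTerm g p r) := by
  have hsum := hB.summable_norm_div_pow hp
  set B := ∑' r, condBTerm g p r
  have hB0 : 0 ≤ B := tsum_nonneg fun r => condBTerm_nonneg g p r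
  have htail : ∑' r, ‖g (p ^ (r + 2))‖ / ((p ^ (r + 2) : ℕ) : ℝ) ≤ B :=
    ((summable_nat_add_iff 2).2 hsum).tsum_le_tsum (norm_div_pow_add_two_le_condBTerm g hp)
      (hB.summable_condBTerm_of_prime hp)
  have hgp : 0 ≤ ‖g p‖ / p := by positivity
  calc ∑' r, ‖g (p ^ r)‖ / ((p ^ r : ℕ) : ℝ)
      = 1 + ‖g p‖ / p + ∑' r, ‖g (p ^ (r + 2))‖ / ((p ^ (r + 2) : ℕ) : ℝ) := by
        rw [← hsum.sum_add_tsum_nat_add 2]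
        simp [sum_range_succ, hg.1]
    _ ≤ 1 + ‖g p‖ / p + B := by gcongr
    _ ≤ (1 + ‖g p‖ / p) * (B + 1) := by linarith [mul_nonneg hgp hB0]
    _ ≤ (1 + ‖g p‖ / p) * Real.exp B := by gcongr; exact Real.add_one_le_exp B

lemma CondC.exists_sum_norm_div_le {β : ℝ} (hC : CondC g β) (hg : IsMult g) (hB : CondB g) :
    ∃ C : ℝ, ∀ x : ℝ, 2 ≤ x →
      ∑ n ∈ Icc 1 ⌊x⌋₊, ‖g n‖ / n ≤ C * Real.log x ^ β := by
  obtain ⟨C, hC⟩ := hC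
  set W := ∑' q : Nat.Primes × ℕ, condBTerm g q.1 q.2
  refine ⟨C * Real.exp W, fun x hx => ?_⟩
  have hprod : 0 ≤ ∏ p ∈ primesLE x, (1 + ‖g p‖ / (p : ℝ)) :=
    prod_nonneg fun p _ => by positivity
  calc ∑ n ∈ Icc 1 ⌊x⌋₊, ‖g n‖ / n
      ≤ ∏ p ∈ primesLE x, ∑' r, ‖g (p ^ r)‖ / ((p ^ r : ℕ) : ℝ) :=
        sum_Icc_le_prod_primesBelow_tsum (f := fun n => ‖g n‖ / n) (fun n => by positivity)
          (by simp [hg.1])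
          (fun h => by rw [hg.2 _ _ h, norm_mul, Nat.cast_mul, mul_div_mul_comm])
          hB.summable_norm_div_pow _
    _ ≤ ∏ p ∈ primesLE x, ((1 + ‖g p‖ / p) * Real.exp (∑' r, condBTerm g p r)) :=
        prod_le_prod (fun p _ => tsum_nonneg fun r => by positivity)
          fun p hp => hB.tsum_norm_div_pow_le hg (prime_of_mem_primesLE hp)
    _ = (∏ p ∈ primesLE x, (1 + ‖g p‖ / p)) *
          Real.exp (∑ p ∈ primesLE x, ∑' r, condBTerm g p r) := by
        rw [prod_mul_distrib, Real.exp_sum]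
    _ ≤ C * Real.log x ^ β * Real.exp W :=
        mul_le_mul (hC x hx) (Real.exp_le_exp.2 (hB.sum_primesLE_tsum_condBTerm_le x))
          (Real.exp_pos _).le (hprod.trans (hC x hx))
    _ = C * Real.exp W * Real.log x ^ β := by ring

end EulerProduct

section LogWeightedSum

lemma sum_le_sum_of_injOn {ι κ M : Type*} [AddCommMonoid M] [PartialOrder M]
    [IsOrderedAddMonoid M] {s : Finset ι} {t : Finset κ} {f : ι → M} {F : κ → M} (e : ι → κ)
    (hmaps : Set.MapsTo e s t) (hinj : Set.InjOn e s) (hle : ∀ i ∈ s, f i ≤ F (e i))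
    (hF : ∀ j ∈ t, 0 ≤ F j) : ∑ i ∈ s, f i ≤ ∑ j ∈ t, F j := by
  classical
  calc ∑ i ∈ s, f i ≤ ∑ i ∈ s, F (e i) := sum_le_sum hle
    _ = ∑ j ∈ s.image e, F j := (sum_image hinj).symm
    _ ≤ ∑ j ∈ t, F j :=
        sum_le_sum_of_subset_of_nonneg (image_subset_iff.2 hmaps) fun j hj _ => hF j hj

lemma natCast_le_div_iff {N k p : ℕ} (hk : 0 < k) : (p : ℝ) ≤ (N : ℝ) / k ↔ p * k ≤ N := by
  rw [le_div_iff₀ (mod_cast hk)]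
  norm_cast

lemma sum_Icc_sum_primeFactors {M : Type*} [AddCommMonoid M] (f : ℕ → ℕ → M) (N : ℕ) :
    ∑ n ∈ Icc 1 N, ∑ p ∈ n.primeFactors, f p (n / p) =
      ∑ k ∈ Icc 1 N, ∑ p ∈ primesLE ((N : ℝ) / k), f p k := by
  rw [sum_sigma', sum_sigma']
  refine sum_nbij' (fun q => ⟨q.1 / q.2, q.2⟩) (fun q => ⟨q.2 * q.1, q.2⟩) ?_ ?_ ?_ ?_ ?_
  · rintro ⟨n, p⟩ hq
    simp only [mem_sigma, mem_Icc, Nat.mem_primeFactors] at hq ⊢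
    obtain ⟨⟨hn1, hnN⟩, hp, hdvd, -⟩ := hq
    have hpos : 0 < n / p := Nat.div_pos (Nat.le_of_dvd hn1 hdvd) hp.pos
    refine ⟨⟨hpos, (Nat.div_le_self n p).trans hnN⟩, mem_primesLE.2 ⟨?_, hp⟩⟩
    rwa [natCast_le_div_iff hpos, Nat.mul_div_cancel' hdvd]
  · rintro ⟨k, p⟩ hq
    simp only [mem_sigma, mem_Icc, Nat.mem_primeFactors, mem_primesLE] at hq ⊢
    obtain ⟨⟨hk1, -⟩, hpk, hp⟩ := hq
    have hpos : 0 < p * k := Nat.mul_pos hp.pos hk1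
    exact ⟨⟨hpos, (natCast_le_div_iff hk1).1 hpk⟩, hp, dvd_mul_right p k, hpos.ne'⟩
  · rintro ⟨n, p⟩ hq
    simp only [mem_sigma, Nat.mem_primeFactors] at hq
    simp only [Nat.mul_div_cancel' hq.2.2.1]
  · rintro ⟨k, p⟩ hq
    simp only [mem_sigma, mem_primesLE] at hq
    simp only [Nat.mul_div_cancel_left k hq.2.2.pos]
  · exact fun _ _ => rfl

variable {g : ℕ → ℂ} {p : ℕ}

/-- The error, at the multiple `p * k` of the prime `p`, made in replacing the contribution
`v_p(p * k) log p * g (p * k)` of `p` to `g (p * k) log (p * k)` by `g p * log p * g k`. -/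
noncomputable def primeDefect (g : ℕ → ℂ) (p k : ℕ) : ℂ :=
  Real.log p * ((k.factorization p + 1) * g (p * k) - g p * g k)

lemma sum_Icc_mul_log_eq (g : ℕ → ℂ) (N : ℕ) :
    ∑ n ∈ Icc 1 N, g n * (Real.log n : ℂ) =
      ∑ k ∈ Icc 1 N, (∑ p ∈ primesLE ((N : ℝ) / k), g p * (Real.log p : ℂ)) * g k +
        ∑ k ∈ Icc 1 N, ∑ p ∈ primesLE ((N : ℝ) / k), primeDefect g p k := by
  have hlog (n : ℕ) : g n * (Real.log n : ℂ) =
      ∑ p ∈ n.primeFactors,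
        ((n / p).factorization p + 1) * (Real.log p : ℂ) * g (p * (n / p)) := by
    rw [Real.log_nat_eq_sum_factorization, Finsupp.sum, Nat.support_factorization,
      Complex.ofReal_sum, mul_sum]
    refine sum_congr rfl fun p hp => ?_
    obtain ⟨hprime, hdvd, hn0⟩ := Nat.mem_primeFactors.1 hp
    have hv : n.factorization p = (n / p).factorization p + 1 := by
      have := (hprime.dvd_iff_one_le_factorization hn0).1 hdvd
      rw [Nat.factorization_div hdvd, Finsupp.tsub_apply, hprime.factorization_self,
        Nat.sub_add_cancel this]
    rw [Nat.mul_div_cancel' hdvd, hv]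
    push_cast
    ring
  rw [sum_congr rfl fun n _ => hlog n, sum_Icc_sum_primeFactors
    fun p k => ((k.factorization p : ℂ) + 1) * (Real.log p : ℂ) * g (p * k), ← sum_add_distrib]
  refine sum_congr rfl fun k _ => ?_
  rw [sum_mul, ← sum_add_distrib]
  refine sum_congr rfl fun p _ => ?_
  rw [primeDefect]
  ring

lemma IsMult.primeDefect_eq_zero (hg : IsMult g) (hp : p.Prime) {k : ℕ} (hpk : ¬p ∣ k) :
    primeDefect g p k = 0 := by
  rw [primeDefect, hg.2 _ _ ((hp.coprime_iff_not_dvd).2 hpk),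
    Nat.factorization_eq_zero_of_not_dvd hpk]
  simp

lemma IsMult.norm_primeDefect_pow_mul_le (hg : IsMult g) (hp : p.Prime) {m : ℕ}
    (hpm : p.Coprime m) (r : ℕ) :
    ‖primeDefect g p (p ^ (r + 1) * m)‖ ≤ (p : ℝ) ^ (r + 2) * condBTerm g p r * ‖g m‖ := by
  have hv : (p ^ (r + 1) * m).factorization p = r + 1 := by
    rw [Nat.factorization_mul_apply_of_coprime (hpm.pow_left _), hp.factorization_pow,
      Nat.factorization_eq_zero_of_not_dvd (hp.coprime_iff_not_dvd.1 hpm)]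
    simp
  have hpow : p * (p ^ (r + 1) * m) = p ^ (r + 2) * m := by ring
  have hlog : ‖(Real.log p : ℂ)‖ = Real.log p := by
    rw [Complex.norm_real, Real.norm_of_nonneg (Real.log_natCast_nonneg p)]
  have hr : ‖(r : ℂ) + 2‖ = r + 2 := mod_cast Complex.norm_natCast (r + 2)
  have hp0 : (p : ℝ) ≠ 0 := mod_cast hp.ne_zero
  calc ‖primeDefect g p (p ^ (r + 1) * m)‖
      = ‖(Real.log p : ℂ) * (((r + 2) * g (p ^ (r + 2)) - g p * g (p ^ (r + 1))) * g m)‖ := by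
        rw [primeDefect, hpow, hv, hg.2 _ _ (hpm.pow_left _), hg.2 _ _ (hpm.pow_left _)]
        push_cast
        ring_nf
    _ ≤ Real.log p * (((r + 2) * ‖g (p ^ (r + 2))‖ + ‖g p‖ * ‖g (p ^ (r + 1))‖) * ‖g m‖) := by
        rw [norm_mul, hlog, norm_mul]
        gcongr
        exact (norm_sub_le _ _).trans_eq (by rw [norm_mul, norm_mul, hr])
    _ = (p : ℝ) ^ (r + 2) * condBTerm g p r * ‖g m‖ := by
        rw [condBTerm]
        field_simp

lemma IsMult.norm_primeDefect_le (hg : IsMult g) (hp : p.Prime) {k : ℕ} (hk : k ≠ 0)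
    (hpk : p ∣ k) :
    ‖primeDefect g p k‖ ≤ (p * k : ℕ) *
      (condBTerm g p (k.factorization p - 1) *
        (‖g (ordCompl[p] k)‖ / (ordCompl[p] k : ℕ))) := by
  have hdecomp : p ^ (k.factorization p - 1 + 1) * ordCompl[p] k = k := by
    rw [Nat.sub_add_cancel ((hp.dvd_iff_one_le_factorization hk).1 hpk),
      Nat.ordProj_mul_ordCompl_eq_self]
  have hcop : p.Coprime (ordCompl[p] k) := Nat.coprime_ordCompl hp hk
  have hm : ((ordCompl[p] k : ℕ) : ℝ) ≠ 0 := mod_cast (Nat.ordCompl_pos p hk).ne'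
  generalize k.factorization p - 1 = r, ordCompl[p] k = m at hdecomp hcop hm ⊢
  subst hdecomp
  refine (hg.norm_primeDefect_pow_mul_le hp hcop r).trans_eq ?_
  push_cast
  field_simp
  ring

lemma IsMult.sum_norm_primeDefect_le (hg : IsMult g) (hp : p.Prime) (N : ℕ) :
    ∑ k ∈ Icc 1 N with p * k ≤ N, ‖primeDefect g p k‖ ≤
      N * ((∑ r ∈ range N, condBTerm g p r) * ∑ m ∈ Icc 1 N, ‖g m‖ / m) := by
  rw [← sum_filter_of_ne (p := (p ∣ ·)) fun k _ hk => by_contra fun hpk =>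
    hk (by rw [hg.primeDefect_eq_zero hp hpk, norm_zero]), sum_mul_sum, ← sum_product', mul_sum]
  have hS {k : ℕ} (hk : k ∈ ({k ∈ {k ∈ Icc 1 N | p * k ≤ N} | p ∣ k} : Finset ℕ)) :
      k ≠ 0 ∧ k ≤ N ∧ p * k ≤ N ∧ p ∣ k := by
    simp only [mem_filter, mem_Icc] at hk
    exact ⟨Nat.one_le_iff_ne_zero.1 hk.1.1.1, hk.1.1.2, hk.1.2, hk.2⟩
  refine sum_le_sum_of_injOn (fun k => (k.factorization p - 1, ordCompl[p] k)) ?_ ?_ ?_ ?_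
  · intro k hk
    obtain ⟨hk0, hkN, -, -⟩ := hS hk
    have hv := Nat.factorization_lt p hk0
    exact mem_product.2 ⟨mem_range.2 (by lia),
      mem_Icc.2 ⟨Nat.ordCompl_pos p hk0, (Nat.ordCompl_le k p).trans hkN⟩⟩
  · intro k hk l hl hkl
    obtain ⟨hk0, -, -, hpk⟩ := hS hk
    obtain ⟨hl0, -, -, hpl⟩ := hS hl
    have hvk := (hp.dvd_iff_one_le_factorization hk0).1 hpk
    have hvl := (hp.dvd_iff_one_le_factorization hl0).1 hpl
    obtain ⟨hpred, hm⟩ := Prod.mk.inj hkl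
    have hv := (tsub_left_inj hvk hvl).1 hpred
    rw [← Nat.ordProj_mul_ordCompl_eq_self k p, ← Nat.ordProj_mul_ordCompl_eq_self l p, hm, hv]
  · intro k hk
    obtain ⟨hk0, -, hpkN, hpk⟩ := hS hk
    refine (hg.norm_primeDefect_le hp hk0 hpk).trans ?_
    have := condBTerm_nonneg g p (k.factorization p - 1)
    gcongr
  · exact fun q _ => mul_nonneg N.cast_nonneg (mul_nonneg (condBTerm_nonneg _ _ _) (by positivity))

lemma IsMult.norm_sum_primeDefect_le (hg : IsMult g) (hB : CondB g) (N : ℕ) :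
    ‖∑ k ∈ Icc 1 N, ∑ p ∈ primesLE ((N : ℝ) / k), primeDefect g p k‖ ≤
      (∑' q : Nat.Primes × ℕ, condBTerm g q.1 q.2) * N * ∑ m ∈ Icc 1 N, ‖g m‖ / m := by
  have hswap : ∑ k ∈ Icc 1 N, ∑ p ∈ primesLE ((N : ℝ) / k), ‖primeDefect g p k‖ =
      ∑ p ∈ primesLE N, ∑ k ∈ Icc 1 N with p * k ≤ N, ‖primeDefect g p k‖ := by
    refine sum_comm' fun k p => ?_
    simp only [mem_primesLE, mem_filter, mem_Icc, Nat.cast_le]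
    constructor
    · rintro ⟨⟨hk1, hkN⟩, hpk, hp⟩
      rw [natCast_le_div_iff hk1] at hpk
      exact ⟨⟨⟨hk1, hkN⟩, hpk⟩, (Nat.le_mul_of_pos_right p hk1).trans hpk, hp⟩
    · rintro ⟨⟨⟨hk1, hkN⟩, hpk⟩, -, hp⟩
      exact ⟨⟨hk1, hkN⟩, (natCast_le_div_iff hk1).2 hpk, hp⟩
  have : 0 ≤ ∑ m ∈ Icc 1 N, ‖g m‖ / m := sum_nonneg fun m _ => by positivity
  calc ‖∑ k ∈ Icc 1 N, ∑ p ∈ primesLE ((N : ℝ) / k), primeDefect g p k‖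
      ≤ ∑ k ∈ Icc 1 N, ∑ p ∈ primesLE ((N : ℝ) / k), ‖primeDefect g p k‖ :=
        norm_sum_le_of_le _ fun k _ => norm_sum_le _ _
    _ ≤ ∑ p ∈ primesLE N, N * ((∑' r, condBTerm g p r) * ∑ m ∈ Icc 1 N, ‖g m‖ / m) := by
        rw [hswap]
        refine sum_le_sum fun p hp => ?_
        have hp := prime_of_mem_primesLE hp
        refine (hg.sum_norm_primeDefect_le hp N).trans ?_
        gcongr
        exact (hB.summable_condBTerm_of_prime hp).sum_le_tsum _ fun r _ => condBTerm_nonneg g p r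
    _ = (∑ p ∈ primesLE N, ∑' r, condBTerm g p r) * N * ∑ m ∈ Icc 1 N, ‖g m‖ / m := by
        rw [sum_mul, sum_mul]
        exact sum_congr rfl fun p _ => by ring
    _ ≤ _ := by gcongr; exact hB.sum_primesLE_tsum_condBTerm_le N

lemma ChebyshevBound.exists_norm_sum_mul_log_le (hT : ChebyshevBound g) (hg : IsMult g)
    (hB : CondB g) :
    ∃ K : ℝ, 0 ≤ K ∧ ∀ N : ℕ, ‖∑ n ∈ Icc 1 N, g n * (Real.log n : ℂ)‖ ≤
      K * N * ∑ n ∈ Icc 1 N, ‖g n‖ / n := by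
  obtain ⟨K, hK⟩ := hT
  have hK0 : 0 ≤ K := by simpa using (norm_nonneg _).trans (hK 1 zero_le_one)
  have hW0 : 0 ≤ ∑' q : Nat.Primes × ℕ, condBTerm g q.1 q.2 :=
    tsum_nonneg fun q => condBTerm_nonneg _ _ _
  refine ⟨K + ∑' q : Nat.Primes × ℕ, condBTerm g q.1 q.2, add_nonneg hK0 hW0, fun N => ?_⟩
  have hmain : ‖∑ k ∈ Icc 1 N, (∑ p ∈ primesLE ((N : ℝ) / k), g p * (Real.log p : ℂ)) * g k‖ ≤
      K * N * ∑ k ∈ Icc 1 N, ‖g k‖ / k := by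
    rw [mul_sum]
    refine norm_sum_le_of_le _ fun k _ => ?_
    calc ‖(∑ p ∈ primesLE ((N : ℝ) / k), g p * (Real.log p : ℂ)) * g k‖
        ≤ K * (N / k) * ‖g k‖ := by rw [norm_mul]; gcongr; exact hK _ (by positivity)
      _ = K * N * (‖g k‖ / k) := by ring
  rw [sum_Icc_mul_log_eq, add_mul, add_mul]
  exact (norm_add_le _ _).trans (add_le_add hmain (hg.norm_sum_primeDefect_le hB N))

end LogWeightedSum

lemma log_mul_norm_sum_le (g : ℕ → ℂ) {s : Finset ℕ} {x : ℝ} (hx : 1 ≤ x)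
    (hs : ∀ n ∈ s, 1 ≤ n ∧ (n : ℝ) ≤ x) :
    Real.log x * ‖∑ n ∈ s, g n‖ ≤
      ‖∑ n ∈ s, g n * (Real.log n : ℂ)‖ + x * ∑ n ∈ s, ‖g n‖ / n := by
  have hsplit : (Real.log x : ℂ) * ∑ n ∈ s, g n = ∑ n ∈ s, g n * (Real.log n : ℂ) +
      ∑ n ∈ s, g n * ((Real.log (x / n) : ℝ) : ℂ) := by
    rw [← sum_add_distrib, mul_sum]
    refine sum_congr rfl fun n hn => ?_
    rw [Real.log_div (by positivity) (Nat.cast_ne_zero.2 (Nat.one_le_iff_ne_zero.1 (hs n hn).1))]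
    push_cast
    ring
  have hrest : ‖∑ n ∈ s, g n * ((Real.log (x / n) : ℝ) : ℂ)‖ ≤ x * ∑ n ∈ s, ‖g n‖ / n := by
    rw [mul_sum]
    refine norm_sum_le_of_le _ fun n hn => ?_
    obtain ⟨hn1, hnx⟩ := hs n hn
    have hn0 : (0 : ℝ) < n := mod_cast hn1
    rw [norm_mul, Complex.norm_real, Real.norm_of_nonneg (Real.log_nonneg ((one_le_div hn0).2 hnx))]
    calc ‖g n‖ * Real.log (x / n) ≤ ‖g n‖ * (x / n) := by
          gcongr; exact Real.log_le_self (by positivity)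
      _ = x * (‖g n‖ / n) := by ring
  calc Real.log x * ‖∑ n ∈ s, g n‖ = ‖(Real.log x : ℂ) * ∑ n ∈ s, g n‖ := by
        rw [norm_mul, Complex.norm_real, Real.norm_of_nonneg (Real.log_nonneg hx)]
    _ ≤ _ := hsplit ▸ (norm_add_le _ _).trans (by gcongr)

theorem stmt2_general (g : ℕ → ℂ) (β : ℝ) (hg : IsMult g) (hT : ChebyshevBound g)
    (hB : CondB g) (hC : CondC g β) :
    ∃ C : ℝ, ∀ x : ℝ, 2 ≤ x →
      ‖∑ n ∈ Finset.Ico 1 ⌈x⌉₊, g n‖ ≤ C * x * Real.log x ^ (β - 1) := by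
  obtain ⟨K, hK0, hK⟩ := hT.exists_norm_sum_mul_log_le hg hB
  obtain ⟨C, hC⟩ := hC.exists_sum_norm_div_le hg hB
  refine ⟨(K + 1) * C, fun x hx => ?_⟩
  have hlog : 0 < Real.log x := Real.log_pos (by linarith)
  have hceil : 0 < ⌈x⌉₊ := Nat.ceil_pos.2 (by linarith)
  rw [← Icc_sub_one_right_eq_Ico_of_not_isMin (not_isMin_of_lt hceil)]
  set N := ⌈x⌉₊ - 1
  have hNx : (N : ℝ) ≤ x := (Nat.lt_ceil.1 (Nat.sub_one_lt hceil.ne')).le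
  have hsum : ∑ n ∈ Icc 1 N, ‖g n‖ / n ≤ C * Real.log x ^ β :=
    (hC x hx).trans' <| sum_le_sum_of_subset_of_nonneg
      (Icc_subset_Icc_right (Nat.le_floor hNx)) fun n _ _ => by positivity
  have hmem (n : ℕ) (hn : n ∈ Icc 1 N) : 1 ≤ n ∧ (n : ℝ) ≤ x :=
    ⟨(mem_Icc.1 hn).1, hNx.trans' (mod_cast (mem_Icc.1 hn).2)⟩
  rw [Real.rpow_sub_one hlog.ne', ← mul_div_assoc, le_div_iff₀' hlog]
  calc Real.log x * ‖∑ n ∈ Icc 1 N, g n‖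
      ≤ ‖∑ n ∈ Icc 1 N, g n * (Real.log n : ℂ)‖ + x * ∑ n ∈ Icc 1 N, ‖g n‖ / n :=
        log_mul_norm_sum_le g (by linarith) hmem
    _ ≤ K * x * ∑ n ∈ Icc 1 N, ‖g n‖ / n + x * ∑ n ∈ Icc 1 N, ‖g n‖ / n := by
        gcongr
        exact (hK N).trans (by gcongr)
    _ = (K + 1) * x * ∑ n ∈ Icc 1 N, ‖g n‖ / n := by ring
    _ ≤ (K + 1) * x * (C * Real.log x ^ β) := by gcongr
    _ = (K + 1) * C * x * Real.log x ^ β := by ring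

theorem stmt2 (g : ℕ → ℂ) (κ : ℂ) (β : ℝ) (hg : IsMult g)
    (hκ : κ.im ^ 2 < 2 * κ.re + 1)
    (hA : CondA g κ) (hB : CondB g)
    (hβ0 : 0 ≤ β) (hβ : β < κ.re + 1) (hC : CondC g β) :
    ∃ C : ℝ, ∀ x : ℝ, 2 ≤ x →
      ‖∑ n ∈ Finset.Ico 1 ⌈x⌉₊, g n‖ ≤ C * x * Real.log x ^ (β - 1) := by
  exact stmt2_general g β hg hA.chebyshevBound hB hC
end

section
/- Let g : ℕ → ℂ be any function, M_g(x) = ∑_{n ≤ x} g(n)/n, let κ ∈ ℂ, and define E(u) = M_g(u) log u − (κ+1) ∫_2^u M_g(t) t^{−1} dt for u ≥ 2. Then for every x ≥ 2, M_g(x) = (κ+1) · log^κ x · ∫_2^x E(u) u^{−1} (log u)^{−κ−2} du + E(x) (log x)^{−1}, where all complex powers of log u are principal-branch. -/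
/-!
With `F(u) = ∫_2^u M_g(t) t⁻¹ dt`, the definition of `E` reads `E = M_g log - (κ + 1) F`, so that
`M_g(x) = E(x) / log x + (κ + 1) F(x) / log x` and only `F` has to be recovered from `E`. Since
`F'(u) = M_g(u) / u` almost everywhere, this is a linear differential equation for `F`, with
integrating factor `(log u) ^ (-κ - 1)`: the derivative of `F(u) (log u) ^ (-κ - 1)` is
`E(u) u⁻¹ (log u) ^ (-κ - 2)`. As `F` is absolutely continuous, integrating from `2` to `x` gives
`F(x) (log x) ^ (-κ - 1) = ∫_2^x E(u) u⁻¹ (log u) ^ (-κ - 2) du`.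
-/

open Filter Finset intervalIntegral

section AbsolutelyContinuous

open MeasureTheory

variable {X Y V : Type*} [PseudoMetricSpace X] [PseudoMetricSpace Y]
  [NormedAddCommGroup V] [NormedSpace ℝ V] {a b : ℝ}

lemma absolutelyContinuousOnInterval_of_dist_le {f : ℝ → X} {g : ℝ → Y}
    (hg : AbsolutelyContinuousOnInterval g a b)
    (hfg : ∀ x ∈ Set.uIcc a b, ∀ y ∈ Set.uIcc a b, dist (f x) (f y) ≤ dist (g x) (g y)) :
    AbsolutelyContinuousOnInterval f a b := by
  rw [absolutelyContinuousOnInterval_iff] at hg ⊢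
  intro ε hε
  obtain ⟨δ, hδ, hgδ⟩ := hg ε hε
  refine ⟨δ, hδ, fun I hI hIδ ↦ (sum_le_sum fun i hi ↦ ?_).trans_lt (hgδ I hI hIδ)⟩
  exact hfg _ (hI.1 i hi).1 _ (hI.1 i hi).2

lemma absolutelyContinuousOnInterval_primitive {f : ℝ → V} (hf : IntervalIntegrable f volume a b) :
    AbsolutelyContinuousOnInterval (fun x ↦ ∫ t in a..x, f t) a b := by
  refine absolutelyContinuousOnInterval_of_dist_le
    (hf.norm.absolutelyContinuousOnInterval_intervalIntegral Set.left_mem_uIcc) fun x hx y hy ↦ ?_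
  have hfx := hf.mono_set (Set.uIcc_subset_uIcc_left hx)
  have hfy := hf.mono_set (Set.uIcc_subset_uIcc_left hy)
  rw [dist_eq_norm, dist_eq_norm, integral_interval_sub_left hfx hfy,
    integral_interval_sub_left hfx.norm hfy.norm]
  exact norm_integral_le_abs_integral_norm

variable [CompleteSpace V]

lemma absolutelyContinuousOnInterval_of_hasDerivAt {f f' : ℝ → V}
    (hf : ∀ x ∈ Set.uIcc a b, HasDerivAt f (f' x) x) (hf' : IntervalIntegrable f' volume a b) :
    AbsolutelyContinuousOnInterval f a b := by
  have primitive_eq {x : ℝ} (hx : x ∈ Set.uIcc a b) : ∫ t in a..x, f' t = f x - f a :=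
    have hsub := Set.uIcc_subset_uIcc_left hx
    integral_eq_sub_of_hasDerivAt (fun t ht ↦ hf t (hsub ht)) (hf'.mono_set hsub)
  refine absolutelyContinuousOnInterval_of_dist_le (absolutelyContinuousOnInterval_primitive hf')
    fun x hx y hy ↦ ?_
  rw [primitive_eq hx, primitive_eq hy, dist_sub_right]

lemma integral_eq_sub_of_absolutelyContinuous_of_ae_hasDerivAt {f f' : ℝ → V}
    (hf : AbsolutelyContinuousOnInterval f a b)
    (hderiv : ∀ᵐ x, x ∈ Set.uIcc a b → HasDerivAt f (f' x) x)
    (hf' : IntervalIntegrable f' volume a b) :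
    ∫ x in a..b, f' x = f b - f a := by
  have hac : AbsolutelyContinuousOnInterval (f - fun x ↦ ∫ t in a..x, f' t) a b :=
    hf.sub (absolutelyContinuousOnInterval_primitive hf')
  have hzero : ∀ᵐ x, x ∈ Set.uIcc a b →
      HasDerivAt (f - fun x ↦ ∫ t in a..x, f' t) 0 x := by
    filter_upwards [hderiv, hf'.ae_hasDerivAt_integral] with x hfx hprim hx
    simpa only [sub_self] using (hfx hx).sub (hprim hx a Set.left_mem_uIcc)
  obtain ⟨c, hc⟩ := hac.const_of_ae_hasDerivAt_zero hzero
  have h := (hc b Set.right_mem_uIcc).trans (hc a Set.left_mem_uIcc).symm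
  simp only [Pi.sub_apply, integral_same, sub_zero] at h
  rw [← h, sub_sub_cancel]

lemma integral_smul_add_deriv_smul_primitive {𝕜 : Type*} [RCLike 𝕜] [NormedSpace 𝕜 V]
    [IsScalarTower ℝ 𝕜 V] {p p' : ℝ → 𝕜} {f : ℝ → V}
    (hp : ∀ x ∈ Set.uIcc a b, HasDerivAt p (p' x) x) (hp' : IntervalIntegrable p' volume a b)
    (hf : IntervalIntegrable f volume a b) :
    ∫ x in a..b, (p x • f x + p' x • ∫ t in a..x, f t) = p b • ∫ t in a..b, f t := by
  have hpac := absolutelyContinuousOnInterval_of_hasDerivAt hp hp'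
  have hfac := absolutelyContinuousOnInterval_primitive hf
  have hderiv : ∀ᵐ x, x ∈ Set.uIcc a b → HasDerivAt (p • fun x ↦ ∫ t in a..x, f t)
      (p x • f x + p' x • ∫ t in a..x, f t) x := by
    filter_upwards [hf.ae_hasDerivAt_integral] with x hprim hx
    exact (hp x hx).smul (hprim hx a Set.left_mem_uIcc)
  have hint : IntervalIntegrable (fun x ↦ p x • f x + p' x • ∫ t in a..x, f t) volume a b :=
    (hf.continuousOn_smul hpac.continuousOn).add (hp'.smul_continuousOn hfac.continuousOn)
  rw [integral_eq_sub_of_absolutelyContinuous_of_ae_hasDerivAt (hpac.smul hfac) hderiv hint]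
  simp only [Pi.smul_apply', integral_same, smul_zero, sub_zero]

end AbsolutelyContinuous

section LogPower

open MeasureTheory

lemma ofReal_log_ne_zero {u : ℝ} (hu : 1 < u) : (Real.log u : ℂ) ≠ 0 :=
  Complex.ofReal_ne_zero.mpr (Real.log_pos hu).ne'

lemma hasDerivAt_ofReal_log_cpow {u : ℝ} (hu : 1 < u) (c : ℂ) :
    HasDerivAt (fun u : ℝ ↦ (Real.log u : ℂ) ^ c)
      (c * (Real.log u : ℂ) ^ (c - 1) * (u : ℂ)⁻¹) u := by
  have hlog : HasDerivAt (fun u : ℝ ↦ (Real.log u : ℂ)) (u : ℂ)⁻¹ u := by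
    simpa only [Complex.ofReal_inv] using (Real.hasDerivAt_log (by positivity)).ofReal_comp
  have hslit : (Real.log u : ℂ) ∈ Complex.slitPlane :=
    Complex.ofReal_mem_slitPlane.mpr (Real.log_pos hu)
  exact (Complex.hasStrictDerivAt_cpow_const hslit).hasDerivAt.comp u hlog

variable {V : Type*} [NormedAddCommGroup V] [NormedSpace ℂ V] {a x : ℝ}

lemma intervalIntegrable_ofReal_inv_smul {f : ℝ → V} (ha : 0 < a) (hx : 0 < x)
    (hf : IntervalIntegrable f volume a x) :
    IntervalIntegrable (fun t ↦ (t : ℂ)⁻¹ • f t) volume a x := by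
  refine hf.continuousOn_smul (Complex.continuous_ofReal.continuousOn.inv₀ fun t ht ↦ ?_)
  exact Complex.ofReal_ne_zero.mpr ((lt_min ha hx).trans_le ht.1).ne'

lemma intervalIntegrable_ofReal_log_cpow_mul_inv (ha : 1 < a) (hx : 1 < x) (c : ℂ) :
    IntervalIntegrable (fun u : ℝ ↦ (Real.log u : ℂ) ^ c * (u : ℂ)⁻¹) volume a x := by
  have hcont : ContinuousOn (fun u : ℝ ↦ (Real.log u : ℂ) ^ c) (Set.uIcc a x) := fun u hu ↦
    (hasDerivAt_ofReal_log_cpow ((lt_min ha hx).trans_le hu.1) c).continuousAt.continuousWithinAt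
  simpa only [smul_eq_mul, mul_comm] using
    intervalIntegrable_ofReal_inv_smul (by positivity) (by positivity) hcont.intervalIntegrable

lemma integral_log_cpow_smul_log_smul_sub_primitive [CompleteSpace V] {M : ℝ → V} (κ : ℂ)
    (ha : 1 < a) (hx : 1 < x) (hM : IntervalIntegrable M volume a x) :
    ∫ u in a..x, ((u : ℂ)⁻¹ * (Real.log u : ℂ) ^ (-κ - 2)) •
        ((Real.log u : ℂ) • M u - (κ + 1) • ∫ t in a..u, (t : ℂ)⁻¹ • M t) =
      (Real.log x : ℂ) ^ (-κ - 1) • ∫ t in a..x, (t : ℂ)⁻¹ • M t := by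
  have one_lt {u : ℝ} (hu : u ∈ Set.uIcc a x) : 1 < u := (lt_min ha hx).trans_le hu.1
  have hp' : IntervalIntegrable
      (fun u : ℝ ↦ (-κ - 1) * (Real.log u : ℂ) ^ (-κ - 1 - 1) * (u : ℂ)⁻¹) volume a x := by
    simpa only [mul_assoc] using
      (intervalIntegrable_ofReal_log_cpow_mul_inv ha hx (-κ - 1 - 1)).const_mul (-κ - 1)
  rw [← integral_smul_add_deriv_smul_primitive
    (fun u hu ↦ hasDerivAt_ofReal_log_cpow (one_lt hu) (-κ - 1)) hp'
    (intervalIntegrable_ofReal_inv_smul (by positivity) (by positivity) hM)]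
  refine integral_congr fun u hu ↦ ?_
  have hpow : (Real.log u : ℂ) ^ (-κ - 1) = (Real.log u : ℂ) ^ (-κ - 2) * Real.log u := by
    have hadd := Complex.cpow_add (-κ - 2) 1 (ofReal_log_ne_zero (one_lt hu))
    rwa [Complex.cpow_one, show -κ - 2 + 1 = -κ - 1 by ring] at hadd
  have hexp : -κ - 1 - 1 = -κ - 2 := by ring
  simp only [hpow, hexp]
  module

theorem stmt9_general [CompleteSpace V] {M E : ℝ → V} (κ : ℂ) (ha : 1 < a) (hx : 1 < x)
    (hM : IntervalIntegrable M volume a x)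
    (hE : ∀ u ∈ Set.uIcc a x,
      E u = (Real.log u : ℂ) • M u - (κ + 1) • ∫ t in a..u, (t : ℂ)⁻¹ • M t) :
    M x =
      ((κ + 1) * (Real.log x : ℂ) ^ κ) •
          (∫ u in a..x, ((u : ℂ)⁻¹ * (Real.log u : ℂ) ^ (-κ - 2)) • E u) +
        (Real.log x : ℂ)⁻¹ • E x := by
  have hlog := ofReal_log_ne_zero hx
  have hprim : ∫ u in a..x, ((u : ℂ)⁻¹ * (Real.log u : ℂ) ^ (-κ - 2)) • E u =
      (Real.log x : ℂ) ^ (-κ - 1) • ∫ t in a..x, (t : ℂ)⁻¹ • M t := by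
    rw [← integral_log_cpow_smul_log_smul_sub_primitive κ ha hx hM]
    exact integral_congr fun u hu ↦ by simp only [hE u hu]
  have hpow : (Real.log x : ℂ) ^ κ * (Real.log x : ℂ) ^ (-κ - 1) = (Real.log x : ℂ)⁻¹ := by
    rw [← Complex.cpow_add _ _ hlog, ← Complex.cpow_neg_one]
    ring_nf
  rw [hprim, hE x Set.right_mem_uIcc, smul_smul, mul_assoc, hpow, smul_sub, smul_smul, smul_smul,
    inv_mul_cancel₀ hlog, one_smul, mul_comm (κ + 1), add_sub_cancel]

end LogPower

lemma intervalIntegrable_Mg (g : ℕ → ℂ) {a b : ℝ} (ha : 0 ≤ a) (hb : 0 ≤ b) :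
    IntervalIntegrable (Mg g) MeasureTheory.volume a b := by
  rw [intervalIntegrable_iff']
  exact (integrableOn_mul_sum_Icc (fun n ↦ g n / (n : ℂ)) (g := fun _ ↦ 1) (le_min ha hb)
    continuousOn_const.integrableOn_Icc).congr_fun (fun _ _ ↦ one_mul _) measurableSet_Icc

theorem stmt9 (g : ℕ → ℂ) (κ : ℂ) (E : ℝ → ℂ)
    (hE : ∀ u : ℝ, 2 ≤ u →
      E u = Mg g u * (Real.log u : ℂ) - (κ + 1) * ∫ t in (2 : ℝ)..u, Mg g t / (t : ℂ)) :
    ∀ x : ℝ, 2 ≤ x →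
      Mg g x =
        (κ + 1) * ((Real.log x : ℂ) ^ κ) *
            (∫ u in (2 : ℝ)..x, E u / (u : ℂ) * ((Real.log u : ℂ) ^ (-κ - 2))) +
          E x / (Real.log x : ℂ) := by
  intro x hx
  have hE' : ∀ u ∈ Set.uIcc 2 x, E u = (Real.log u : ℂ) • Mg g u -
      (κ + 1) • ∫ t in (2 : ℝ)..u, (t : ℂ)⁻¹ • Mg g t := fun u hu ↦ by
    simpa only [smul_eq_mul, div_eq_mul_inv, mul_comm] using hE u ((le_min le_rfl hx).trans hu.1)
  simpa only [smul_eq_mul, div_eq_mul_inv, mul_comm, mul_left_comm, mul_assoc] using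
    stmt9_general κ one_lt_two (by linarith) (intervalIntegrable_Mg g zero_le_two (by linarith)) hE'
end
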